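/- Let 1 ≤ p < ∞, 1 ≤ q < ∞, r ∈ ℕ, and let α ∈ (0, r) be non-integer with integer part [α]. There exist constants c, C > 0 such that for all f ∈ X^p: c N₁(f) ≤ N₂(f) ≤ C N₁(f), where N₁(f) = ‖f‖_{W^{[α]}_p} + Σ_{1≤j₁,…,j_{[α]}≤n} (∫₀^∞ (s^{[α]−α} Ω¹_p(s, Θ_{j₁}⋯Θ_{j_{[α]}} f))^q ds/s)^{1/q} and N₂(f) = ‖f‖_{X^p} + (∫₀^∞ (s^{−α} Ω^r_p(s, f))^q ds/s)^{1/q}; in particular N₁(f) is finite if and only if N₂(f) is finite. -/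

import Mathlib

/-! The argument is carried out for commuting strongly continuous groups of isometries `U_j` on a
Banach space (`IsIsomGroups`); the Mellin translations are such a family because the coordinatewise
exponential transports them to ordinary translations of `L^p(ℝⁿ)`
(`IsMellinTranslation.isIsomGroups`). Let `m = [α]`.

*Upper bound `N₂ ≤ C N₁`* (`besovOmega_le`). Since `‖(U_j(τ) - I) f‖ ≤ |τ| ‖Θ_j f‖`, in a mixed
difference of order `r ≥ m + 1` one may replace `m` differences by `s^m` times a derivative of order
`m`, keep one difference, and bound the others by `2`. Hence
`Ω^r(s, f) ≤ C s^m ∑_J Ω¹(s, Θ_J f)` (`mixedMod_le_sum`).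

*Lower bound `c N₁ ≤ N₂`* (`besovFracNorm_le`). Let `P_h` be the Steklov mean over the cube
`[0,h]ⁿ` and `A_h = I - (I - P_h^N)^r` with `N = m + 1`. Then `‖f - A_h f‖ ≤ C Ω^r(h, f)`, and every
product of `k ≤ N` generators is bounded by `C h^{-k}` on the range of `A_h` (`exists_smoothing`).
With the approximants `A_h² f` the increments factor as
`A_{h/2}² f - A_h² f = (A_{h/2} + A_h)(A_{h/2} - A_h) f`, so their derivatives of order `k` are
`O(h^{-k} Ω^r(h, f))` (`exists_isApprox`). Finiteness of `N₂` gives `Ω^r(h, f) = O(h^α)` because the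
modulus is monotone (`le_mul_lq`); as `α > m`, the derivatives of order at most `m` of the
approximants converge geometrically along dyadic scales, and closedness of the generators identifies
the limits as the derivatives of `f` (`IsApprox.exists_isIterDeriv`). Telescoping over all dyadic
scales, with the trivial bound below `s` and one additional derivative above `s`, yields
`Ω¹(s, Θ_J f) ≤ C ∑_{h = 2^{-d}s} h^{-m} Ω^r(h, f) + C s ∑_{h = 2^{d+1}s} h^{-m-1} Ω^r(h, f)`
(`IsApprox.norm_diff_le`). Minkowski's inequality and the dilation invariance of `ds/s` bound the
weighted `L^q` norm of the right-hand side by two geometric series, which converge because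
`m < α < m + 1` (`IsApprox.lq_le`). -/

open MeasureTheory Filter Topology ENNReal

noncomputable section

/-- `g` is the value at `f` of the infinitesimal generator of the
strongly continuous one-parameter group `T`. -/
def GenDeriv {E : Type*} [NormedAddCommGroup E] [NormedSpace ℂ E]
    (T : ℝ → E →L[ℂ] E) (f g : E) : Prop :=
  Filter.Tendsto (fun t : ℝ => t⁻¹ • (T t f - f)) (𝓝[≠] (0 : ℝ)) (𝓝 g)

/-- The measure `dμ = dx₁⋯dxₙ/(x₁⋯xₙ)` on `(0,∞)ⁿ ⊂ ℝⁿ`. -/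
def mellinMeasure (n : ℕ) : Measure (Fin n → ℝ) :=
  ((volume : Measure (Fin n → ℝ)).restrict {x | ∀ i, 0 < x i}).withDensity
    fun x => ∏ i, ENNReal.ofReal (x i)⁻¹

/-- Dilation of the `j`-th coordinate by `e^t`. -/
def mellinDilate {n : ℕ} (j : Fin n) (t : ℝ) (x : Fin n → ℝ) : Fin n → ℝ :=
  Function.update x j (Real.exp t * x j)

/-- `U` is the family of Mellin translation groups `(U_j(t)f)(x) = f(x₁,…,e^t x_j,…,xₙ)`. -/
def IsMellinTranslation {n : ℕ} (p : ℝ≥0∞) [Fact (1 ≤ p)]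
    (U : Fin n → ℝ → (Lp ℂ p (mellinMeasure n) →L[ℂ] Lp ℂ p (mellinMeasure n))) : Prop :=
  ∀ (j : Fin n) (t : ℝ) (f : Lp ℂ p (mellinMeasure n)),
    (U j t f : (Fin n → ℝ) → ℂ) =ᵐ[mellinMeasure n] fun x => f (mellinDilate j t x)

/-- Iterated generator: `IsIterDeriv U [j₁,…,j_k] f g` means `g = Θ_{j₁}⋯Θ_{j_k} f`. -/
def IsIterDeriv {E : Type*} [NormedAddCommGroup E] [NormedSpace ℂ E] {n : ℕ}
    (U : Fin n → ℝ → E →L[ℂ] E) : List (Fin n) → E → E → Prop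
  | [], f, g => g = f
  | j :: L, f, g => ∃ h, IsIterDeriv U L f h ∧ GenDeriv (U j) h g

/-- Modulus of continuity `ω^m(s,f) = sup_{0≤τ≤s} ‖(T(τ)-I)^m f‖`. -/
def omegaMod {E : Type*} [NormedAddCommGroup E] [NormedSpace ℂ E]
    (T : ℝ → E →L[ℂ] E) (m : ℕ) (s : ℝ) (f : E) : ℝ :=
  sSup ((fun τ => ‖((T τ - 1) ^ m) f‖) '' Set.Icc 0 s)

/-- Mixed modulus of continuity
`Ω^r(s,f) = Σ_{j₁,…,j_r} sup_{0≤τᵢ≤s} ‖(U_{j₁}(τ₁)-I)⋯(U_{j_r}(τ_r)-I) f‖`. -/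
def mixedMod {E : Type*} [NormedAddCommGroup E] [NormedSpace ℂ E] {n : ℕ}
    (U : Fin n → ℝ → E →L[ℂ] E) (r : ℕ) (s : ℝ) (f : E) : ℝ :=
  ∑ J : Fin r → Fin n,
    sSup ((fun τ : Fin r → ℝ => ‖((List.ofFn fun i => U (J i) (τ i) - 1).prod) f‖) ''
      Set.univ.pi fun _ => Set.Icc 0 s)

/-- The list `[1,…,1,2,…,2,…]` encoding the operator `Θ₁^{a₁}⋯Θₙ^{aₙ}`. -/
def multiIndexList {n : ℕ} (a : Fin n → ℕ) : List (Fin n) :=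
  (List.ofFn fun i => List.replicate (a i) i).flatten

/-- `f` belongs to the Sobolev–Mellin space `W^r`: all derivatives `Θ₁^{a₁}⋯Θₙ^{aₙ} f`
with `|a| = r` exist. -/
def memW {E : Type*} [NormedAddCommGroup E] [NormedSpace ℂ E] {n : ℕ}
    (U : Fin n → ℝ → E →L[ℂ] E) (r : ℕ) (f : E) : Prop :=
  ∀ a : Fin n → ℕ, (∑ i, a i) = r → ∃ g, IsIterDeriv U (multiIndexList a) f g

/-- The value `Θ_{j₁}⋯Θ_{j_k} f` (or `0` if it does not exist). -/
def iterDerivVal {E : Type*} [NormedAddCommGroup E] [NormedSpace ℂ E] {n : ℕ}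
    (U : Fin n → ℝ → E →L[ℂ] E) (L : List (Fin n)) (f : E) : E :=
  haveI := Classical.propDecidable (∃ g, IsIterDeriv U L f g)
  if h : ∃ g, IsIterDeriv U L f g then h.choose else 0

/-- The Sobolev–Mellin norm `‖f‖ + Σ_{|a|=r} ‖Θ₁^{a₁}⋯Θₙ^{aₙ} f‖` (for `r = 0` it is `‖f‖`). -/
def WNorm {E : Type*} [NormedAddCommGroup E] [NormedSpace ℂ E] {n : ℕ}
    (U : Fin n → ℝ → E →L[ℂ] E) (r : ℕ) (f : E) : ℝ :=
  ‖f‖ + ∑ a ∈ (Fintype.piFinset fun _ : Fin n => Finset.range (r + 1)).filter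
      (fun a => (∑ i, a i) = r ∧ r ≠ 0),
    ‖iterDerivVal U (multiIndexList a) f‖

/-- Peetre's K-functional for the pair `(X^p, W^r_p)`. -/
def Kfun {E : Type*} [NormedAddCommGroup E] [NormedSpace ℂ E] {n : ℕ}
    (U : Fin n → ℝ → E →L[ℂ] E) (r : ℕ) (t : ℝ) (f : E) : ℝ :=
  sInf {v | ∃ f₀ f₁ : E, f = f₀ + f₁ ∧ memW U r f₁ ∧ v = ‖f₀‖ + t * WNorm U r f₁}

/-- The Besov–Mellin (quasi-)norm via the mixed modulus of continuity:
`‖f‖ + (∫₀^∞ (s^{-α} Ω^r_p(s,f))^q ds/s)^{1/q}`, valued in `ℝ≥0∞`. -/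
def besovOmega {E : Type*} [NormedAddCommGroup E] [NormedSpace ℂ E] {n : ℕ}
    (U : Fin n → ℝ → E →L[ℂ] E) (r : ℕ) (α q : ℝ) (f : E) : ℝ≥0∞ :=
  ENNReal.ofReal ‖f‖ +
    (∫⁻ s in Set.Ioi (0 : ℝ),
      ENNReal.ofReal ((s ^ (-α) * mixedMod U r s f) ^ q / s)) ^ (1 / q)

/-- The extended Sobolev–Mellin norm (equal to `∞` if some derivative does not exist). -/
def WNormE {E : Type*} [NormedAddCommGroup E] [NormedSpace ℂ E] {n : ℕ}
    (U : Fin n → ℝ → E →L[ℂ] E) (r : ℕ) (f : E) : ℝ≥0∞ :=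
  ENNReal.ofReal ‖f‖ +
    ∑ a ∈ (Fintype.piFinset fun _ : Fin n => Finset.range (r + 1)).filter
        (fun a => (∑ i, a i) = r ∧ r ≠ 0),
      (haveI := Classical.propDecidable (∃ g, IsIterDeriv U (multiIndexList a) f g)
       if h : ∃ g, IsIterDeriv U (multiIndexList a) f g then ENNReal.ofReal ‖h.choose‖
       else ⊤)

/-- The norm (3.8) of the paper:
`‖f‖_{W^{[α]}_p} + Σ_{j₁,…,j_{[α]}} (∫₀^∞ (s^{[α]-α} Ω¹_p(s, Θ_{j₁}⋯Θ_{j_{[α]}} f))^q ds/s)^{1/q}`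
(valued in `ℝ≥0∞`, equal to `∞` if `f` is not in the relevant domains). -/
def besovFracNorm {E : Type*} [NormedAddCommGroup E] [NormedSpace ℂ E] {n : ℕ}
    (U : Fin n → ℝ → E →L[ℂ] E) (m : ℕ) (α q : ℝ) (f : E) : ℝ≥0∞ :=
  WNormE U m f +
    ∑ J : Fin m → Fin n,
      (haveI := Classical.propDecidable (∃ g, IsIterDeriv U (List.ofFn J) f g)
       if h : ∃ g, IsIterDeriv U (List.ofFn J) f g then
         (∫⁻ s in Set.Ioi (0 : ℝ),
           ENNReal.ofReal ((s ^ ((m : ℝ) - α) * mixedMod U 1 s h.choose) ^ q / s)) ^ (1 / q)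
       else ⊤)

/-! ### Mellin translations as commuting isometry groups -/

/-- The coordinatewise exponential `ℝⁿ → (0,∞)ⁿ`. -/
def expCoord (n : ℕ) (y : Fin n → ℝ) : Fin n → ℝ := fun i => Real.exp (y i)

/-- The exponential carries Lebesgue measure to the Mellin measure, so that `U_j` is conjugate to
the translation group of `L^p(ℝⁿ)` in direction `j`. -/
lemma measurePreserving_expCoord (n : ℕ) :
    MeasurePreserving (expCoord n) volume (mellinMeasure n) := by
  have hcont : Continuous (expCoord n) := by unfold expCoord; fun_prop
  refine ⟨hcont.measurable, ?_⟩
  ext s hs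
  have hpos : MeasurableSet {x : Fin n → ℝ | ∀ i, 0 < x i} := by measurability
  have himg : expCoord n '' (expCoord n ⁻¹' s) = s ∩ {x : Fin n → ℝ | ∀ i, 0 < x i} := by
    rw [Set.image_preimage_eq_inter_range]
    congr 1
    ext x
    constructor
    · rintro ⟨y, rfl⟩ i
      exact Real.exp_pos _
    · intro hx
      exact ⟨fun i => Real.log (x i), funext fun i => Real.exp_log (hx i)⟩
  have hinj : Function.Injective (expCoord n) := by
    intro x y h
    funext i
    exact Real.exp_injective (congrFun h i)
  have hder : ∀ y ∈ expCoord n ⁻¹' s, HasFDerivWithinAt (expCoord n)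
      (ContinuousLinearMap.pi fun i =>
        Real.exp (y i) • ContinuousLinearMap.proj (R := ℝ) (φ := fun _ : Fin n => ℝ) i)
      (expCoord n ⁻¹' s) y := by
    intro y _
    refine HasFDerivAt.hasFDerivWithinAt ?_
    rw [hasFDerivAt_pi]
    intro i
    exact (ContinuousLinearMap.proj (R := ℝ) (φ := fun _ : Fin n => ℝ) i).hasFDerivAt.exp
  rw [Measure.map_apply hcont.measurable hs, mellinMeasure, withDensity_apply _ hs,
    Measure.restrict_restrict hs, ← himg,
    lintegral_image_eq_lintegral_abs_det_fderiv_mul volume (hcont.measurable hs) hder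
      hinj.injOn]
  have hone : ∀ y : Fin n → ℝ, ENNReal.ofReal |(ContinuousLinearMap.pi fun i =>
        Real.exp (y i) • ContinuousLinearMap.proj (R := ℝ) (φ := fun _ : Fin n => ℝ) i).det| *
      ∏ i, ENNReal.ofReal (expCoord n y i)⁻¹ = 1 := by
    intro y
    have hdet : (ContinuousLinearMap.pi fun i =>
        Real.exp (y i) • ContinuousLinearMap.proj (R := ℝ) (φ := fun _ : Fin n => ℝ) i).det
        = ∏ i, Real.exp (y i) := by
      have : ((ContinuousLinearMap.pi fun i => Real.exp (y i) •
          ContinuousLinearMap.proj (R := ℝ) (φ := fun _ : Fin n => ℝ) i :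
          (Fin n → ℝ) →L[ℝ] (Fin n → ℝ)) : (Fin n → ℝ) →ₗ[ℝ] (Fin n → ℝ))
          = Matrix.toLin' (Matrix.diagonal fun i => Real.exp (y i)) := by
        ext x i
        simp [Matrix.toLin'_apply, Matrix.mulVec_diagonal]
      rw [ContinuousLinearMap.det, this, LinearMap.det_toLin', Matrix.det_diagonal]
    rw [hdet, abs_of_pos (Finset.prod_pos fun i _ => Real.exp_pos _),
      ENNReal.ofReal_prod_of_nonneg (fun i _ => (Real.exp_pos _).le), ← Finset.prod_mul_distrib]
    refine Finset.prod_eq_one fun i _ => ?_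
    rw [← ENNReal.ofReal_mul (Real.exp_pos _).le, expCoord,
      mul_inv_cancel₀ (Real.exp_pos _).ne', ENNReal.ofReal_one]
  simp_rw [hone]
  simp

/-- Translation of the `j`-th coordinate, the logarithmic form of `mellinDilate`. -/
def shiftCoord {n : ℕ} (j : Fin n) (t : ℝ) (y : Fin n → ℝ) : Fin n → ℝ := y + Pi.single j t

lemma mellinDilate_expCoord {n : ℕ} (j : Fin n) (t : ℝ) (y : Fin n → ℝ) :
    mellinDilate j t (expCoord n y) = expCoord n (shiftCoord j t y) := by
  funext i
  by_cases h : i = j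
  · subst h
    simp [mellinDilate, expCoord, shiftCoord, Real.exp_add, mul_comm]
  · simp [mellinDilate, expCoord, shiftCoord, h]

lemma measurePreserving_shiftCoord {n : ℕ} (j : Fin n) (t : ℝ) :
    MeasurePreserving (shiftCoord j t) volume volume :=
  measurePreserving_add_right volume _

lemma measurable_mellinDilate {n : ℕ} (j : Fin n) (t : ℝ) : Measurable (mellinDilate j t) := by
  unfold mellinDilate
  refine measurable_pi_lambda _ fun i => ?_
  by_cases h : i = j
  · subst h
    simp only [Function.update_self]
    fun_prop
  · simp only [Function.update_of_ne h]
    fun_prop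

lemma measurePreserving_mellinDilate {n : ℕ} (j : Fin n) (t : ℝ) :
    MeasurePreserving (mellinDilate j t) (mellinMeasure n) (mellinMeasure n) := by
  refine ⟨measurable_mellinDilate j t, ?_⟩
  have h := measurePreserving_expCoord n
  conv_lhs => rw [← h.map_eq]
  rw [Measure.map_map (measurable_mellinDilate j t) h.measurable]
  have : mellinDilate j t ∘ expCoord n = expCoord n ∘ shiftCoord j t :=
    funext fun y => mellinDilate_expCoord j t y
  rw [this]
  exact (h.comp (measurePreserving_shiftCoord j t)).map_eq

/-- A family of commuting strongly continuous one-parameter groups of isometries. -/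
structure IsIsomGroups {E : Type*} [NormedAddCommGroup E] [NormedSpace ℂ E] {n : ℕ}
    (U : Fin n → ℝ → E →L[ℂ] E) : Prop where
  zero : ∀ j, U j 0 = 1
  add : ∀ j s t, U j (s + t) = U j s * U j t
  comm : ∀ i j s t, Commute (U i s) (U j t)
  norm : ∀ j t g, ‖U j t g‖ = ‖g‖
  cont : ∀ j g, Continuous fun t => U j t g

lemma IsMellinTranslation.eq_comp {n : ℕ} {p : ℝ≥0∞} [Fact (1 ≤ p)]
    {U : Fin n → ℝ → (Lp ℂ p (mellinMeasure n) →L[ℂ] Lp ℂ p (mellinMeasure n))}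
    (hU : IsMellinTranslation p U) (j : Fin n) (t : ℝ) (f : Lp ℂ p (mellinMeasure n)) :
    U j t f = Lp.compMeasurePreserving _ (measurePreserving_mellinDilate j t) f := by
  apply Lp.ext
  exact (hU j t f).trans (Lp.coeFn_compMeasurePreserving f
    (measurePreserving_mellinDilate j t)).symm

lemma compMeasurePreserving_congr_fun {α β : Type*} [MeasurableSpace α] [MeasurableSpace β]
    {μ : Measure α} {ν : Measure β} {p : ℝ≥0∞} {f g : α → β} (hf : MeasurePreserving f μ ν)
    (hg : MeasurePreserving g μ ν) (h : f = g) (F : Lp ℂ p ν) :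
    Lp.compMeasurePreserving f hf F = Lp.compMeasurePreserving g hg F := by
  subst h; rfl

lemma IsMellinTranslation.isIsomGroups {n : ℕ} {p : ℝ≥0∞} [Fact (1 ≤ p)] (hp : p ≠ ∞)
    {U : Fin n → ℝ → (Lp ℂ p (mellinMeasure n) →L[ℂ] Lp ℂ p (mellinMeasure n))}
    (hU : IsMellinTranslation p U) : IsIsomGroups U where
  zero j := by
    ext1 f
    rw [hU.eq_comp, one_apply_eq_self,
      compMeasurePreserving_congr_fun _ (MeasurePreserving.id _), Lp.compMeasurePreserving_id_apply]
    funext x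
    simp [mellinDilate]
  add j s t := by
    ext1 f
    rw [mul_apply_eq_comp, hU.eq_comp, hU.eq_comp, hU.eq_comp,
      ← Lp.compMeasurePreserving_comp_apply]
    apply compMeasurePreserving_congr_fun
    funext x
    simp only [mellinDilate, Function.comp, Function.update_self, Function.update_idem,
      Real.exp_add]
    congr 1
    ring
  comm i j s t := by
    by_cases hij : i = j
    · subst hij
      ext1 f
      rw [mul_apply_eq_comp, mul_apply_eq_comp, hU.eq_comp, hU.eq_comp,
        hU.eq_comp, hU.eq_comp, ← Lp.compMeasurePreserving_comp_apply,
        ← Lp.compMeasurePreserving_comp_apply]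
      apply compMeasurePreserving_congr_fun
      funext x
      simp only [mellinDilate, Function.comp, Function.update_self, Function.update_idem]
      congr 1
      ring
    · ext1 f
      rw [mul_apply_eq_comp, mul_apply_eq_comp, hU.eq_comp, hU.eq_comp,
        hU.eq_comp, hU.eq_comp, ← Lp.compMeasurePreserving_comp_apply,
        ← Lp.compMeasurePreserving_comp_apply]
      apply compMeasurePreserving_congr_fun
      funext x
      simp only [mellinDilate, Function.comp, Function.update_of_ne hij,
        Function.update_of_ne (Ne.symm hij)]
      exact Function.update_comm hij _ _ _
  norm j t g := by
    rw [hU.eq_comp, Lp.norm_compMeasurePreserving]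
  cont j g := by
    -- Mellin measure is not locally finite at the coordinate hyperplanes, so continuity is
    -- transported from Lebesgue measure on `ℝⁿ` by the exponential change of variables.
    have he := measurePreserving_expCoord n
    have hiso : Isometry (Lp.compMeasurePreserving (E := ℂ) (p := p) (expCoord n) he) :=
      Lp.isometry_compMeasurePreserving he
    rw [hiso.isEmbedding.continuous_iff]
    have key : (Lp.compMeasurePreserving (E := ℂ) (p := p) (expCoord n) he) ∘
        (fun t => U j t g) = fun t => Lp.compMeasurePreserving (shiftCoord j t)
          (measurePreserving_shiftCoord j t)
          (Lp.compMeasurePreserving (E := ℂ) (p := p) (expCoord n) he g) := by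
      funext t
      simp only [Function.comp]
      rw [hU.eq_comp, ← Lp.compMeasurePreserving_comp_apply,
        ← Lp.compMeasurePreserving_comp_apply]
      apply compMeasurePreserving_congr_fun
      exact funext fun y => mellinDilate_expCoord j t y
    rw [key]
    let G : C(ℝ × (Fin n → ℝ), Fin n → ℝ) :=
      ⟨fun z => shiftCoord j z.1 z.2, by
        unfold shiftCoord
        refine continuous_snd.add ?_
        exact (continuous_single j).comp continuous_fst⟩
    exact Continuous.compMeasurePreservingLp
      (f := fun _ => Lp.compMeasurePreserving (E := ℂ) (p := p) (expCoord n) he g)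
      (g := fun t => G.curry t) continuous_const (ContinuousMap.continuous G.curry)
      (fun t => measurePreserving_shiftCoord j t) hp

/-! ### Generators and one-directional Steklov means -/

section Groups

variable {E : Type*} [NormedAddCommGroup E] [NormedSpace ℂ E] {n : ℕ}

lemma GenDeriv.unique {T : ℝ → E →L[ℂ] E} {f g g' : E} (h : GenDeriv T f g)
    (h' : GenDeriv T f g') : g = g' :=
  tendsto_nhds_unique h h'

lemma IsIterDeriv.unique {U : Fin n → ℝ → E →L[ℂ] E} {L : List (Fin n)} {f g g' : E}
    (h : IsIterDeriv U L f g) (h' : IsIterDeriv U L f g') : g = g' := by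
  induction L generalizing g g' with
  | nil => exact Eq.trans h (Eq.symm h')
  | cons j L ih =>
    obtain ⟨k, hk, hg⟩ := h
    obtain ⟨k', hk', hg'⟩ := h'
    rw [ih hk hk'] at hg
    exact hg.unique hg'

lemma GenDeriv.map {T : ℝ → E →L[ℂ] E} {f g : E} (h : GenDeriv T f g) (X : E →L[ℂ] E)
    (hX : ∀ t, Commute (T t) X) : GenDeriv T (X f) (X g) := by
  have := (X.continuous.tendsto g).comp h
  refine this.congr fun t => ?_
  have hc : T t (X f) = X (T t f) := congrArg (fun Y : E →L[ℂ] E => Y f) (hX t).eq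
  simp only [Function.comp]
  rw [hc, ← map_sub]
  exact (X.restrictScalars ℝ).map_smul _ _

namespace IsIsomGroups

variable {U : Fin n → ℝ → E →L[ℂ] E}

lemma norm_le_one (hU : IsIsomGroups U) (j : Fin n) (t : ℝ) : ‖U j t‖ ≤ 1 :=
  ContinuousLinearMap.opNorm_le_bound _ zero_le_one fun g => by rw [hU.norm, one_mul]

lemma norm_diff_le (hU : IsIsomGroups U) (j : Fin n) (t : ℝ) (g : E) :
    ‖(U j t - 1) g‖ ≤ 2 * ‖g‖ := by
  calc ‖(U j t - 1) g‖ = ‖U j t g - g‖ := rfl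
    _ ≤ ‖U j t g‖ + ‖g‖ := norm_sub_le _ _
    _ = 2 * ‖g‖ := by rw [hU.norm]; ring

lemma intervalIntegrable (hU : IsIsomGroups U) (j : Fin n) (g : E) (a b : ℝ) :
    IntervalIntegrable (fun τ => U j τ g) volume a b :=
  (hU.cont j g).intervalIntegrable _ _

lemma genDeriv_of_hasDerivAt (hU : IsIsomGroups U) {j : Fin n} {f g : E}
    (h : HasDerivAt (fun t => U j t f) g 0) : GenDeriv (U j) f g := by
  have := hasDerivAt_iff_tendsto_slope_zero.1 h
  refine this.congr fun t => ?_
  rw [zero_add, hU.zero]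
  rfl

lemma hasDerivAt (hU : IsIsomGroups U) {j : Fin n} {f g : E} (h : GenDeriv (U j) f g) (t : ℝ) :
    HasDerivAt (fun t => U j t f) (U j t g) t := by
  rw [hasDerivAt_iff_tendsto_slope_zero]
  have := ((U j t).continuous.tendsto g).comp h
  refine this.congr fun s => ?_
  simp only [Function.comp]
  rw [hU.add, mul_apply_eq_comp, ← map_sub]
  exact ((U j t).restrictScalars ℝ).map_smul _ _

lemma norm_integral_le (hU : IsIsomGroups U) (j : Fin n) (g : E) (t : ℝ) :
    ‖∫ τ in (0 : ℝ)..t, U j τ g‖ ≤ |t| * ‖g‖ := by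
  have := intervalIntegral.norm_integral_le_of_norm_le_const (a := 0) (b := t)
    (f := fun τ => U j τ g) (C := ‖g‖) (fun x _ => (hU.norm j x g).le)
  rwa [sub_zero, mul_comm] at this

/-- The average `h⁻¹ ∫₀ʰ U_j(τ) dτ` of the group `U_j`, the Steklov mean in direction `j`. -/
def avg (hU : IsIsomGroups U) (h : ℝ) (j : Fin n) : E →L[ℂ] E :=
  LinearMap.mkContinuous
    { toFun := fun g => h⁻¹ • ∫ τ in (0 : ℝ)..h, U j τ g
      map_add' := fun f g => by
        simp_rw [map_add]
        rw [intervalIntegral.integral_add (hU.intervalIntegrable j _ _ _)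
          (hU.intervalIntegrable j _ _ _), smul_add]
      map_smul' := fun c g => by
        simp_rw [map_smul]
        rw [intervalIntegral.integral_smul, smul_comm]
        rfl } 1 (fun g => by
      simp only [LinearMap.coe_mk, AddHom.coe_mk]
      rw [norm_smul, norm_inv, Real.norm_eq_abs, one_mul]
      calc |h|⁻¹ * ‖∫ τ in (0 : ℝ)..h, U j τ g‖ ≤ |h|⁻¹ * (|h| * ‖g‖) := by
            gcongr
            exact hU.norm_integral_le j g h
        _ = (|h|⁻¹ * |h|) * ‖g‖ := by ring
        _ ≤ 1 * ‖g‖ := by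
            gcongr
            exact inv_mul_le_one
        _ = ‖g‖ := one_mul _)

lemma avg_apply (hU : IsIsomGroups U) (h : ℝ) (j : Fin n) (g : E) :
    hU.avg h j g = h⁻¹ • ∫ τ in (0 : ℝ)..h, U j τ g := rfl

lemma norm_avg_le (hU : IsIsomGroups U) (h : ℝ) (j : Fin n) : ‖hU.avg h j‖ ≤ 1 :=
  LinearMap.mkContinuous_norm_le _ zero_le_one _

variable [CompleteSpace E]

lemma sub_eq_integral (hU : IsIsomGroups U) {j : Fin n} {f g : E} (h : GenDeriv (U j) f g)
    (t : ℝ) : U j t f - f = ∫ τ in (0 : ℝ)..t, U j τ g := by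
  rw [intervalIntegral.integral_eq_sub_of_hasDerivAt (fun s _ => hU.hasDerivAt h s)
    (hU.intervalIntegrable j g 0 t), hU.zero]
  rfl

lemma genDeriv_of_sub_eq_integral (hU : IsIsomGroups U) {j : Fin n} {f g : E}
    (h : ∀ t, U j t f - f = ∫ τ in (0 : ℝ)..t, U j τ g) : GenDeriv (U j) f g := by
  apply hU.genDeriv_of_hasDerivAt
  have h1 : HasDerivAt (fun t => ∫ τ in (0 : ℝ)..t, U j τ g) (U j 0 g) 0 :=
    (hU.cont j g).integral_hasStrictDerivAt 0 0 |>.hasDerivAt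
  have h2 : (fun t => U j t f) = fun t => (∫ τ in (0 : ℝ)..t, U j τ g) + f := by
    funext t
    rw [← h t, sub_add_cancel]
  rw [h2]
  simpa [hU.zero] using h1.add_const f

lemma norm_sub_le_of_genDeriv (hU : IsIsomGroups U) {j : Fin n} {f g : E}
    (h : GenDeriv (U j) f g) (t : ℝ) : ‖(U j t - 1) f‖ ≤ |t| * ‖g‖ := by
  have : (U j t - 1) f = U j t f - f := rfl
  rw [this, hU.sub_eq_integral h]
  exact hU.norm_integral_le j g t

/-- The infinitesimal generator is a closed operator. -/
lemma genDeriv_of_tendsto (hU : IsIsomGroups U) {j : Fin n} {f g : E} {F G : ℕ → E}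
    (hF : Tendsto F atTop (𝓝 f)) (hG : Tendsto G atTop (𝓝 g))
    (h : ∀ k, GenDeriv (U j) (F k) (G k)) : GenDeriv (U j) f g := by
  apply hU.genDeriv_of_sub_eq_integral
  intro t
  have h1 : Tendsto (fun k => U j t (F k) - F k) atTop (𝓝 (U j t f - f)) :=
    (((U j t).continuous.tendsto f).comp hF).sub hF
  have h2 : Tendsto (fun k => ∫ τ in (0 : ℝ)..t, U j τ (G k)) atTop
      (𝓝 (∫ τ in (0 : ℝ)..t, U j τ g)) := by
    rw [tendsto_iff_norm_sub_tendsto_zero] at hG ⊢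
    refine squeeze_zero (fun _ => norm_nonneg _) (fun k => ?_)
      (by simpa using hG.const_mul |t|)
    rw [← intervalIntegral.integral_sub (hU.intervalIntegrable j _ 0 t)
      (hU.intervalIntegrable j _ 0 t)]
    simp_rw [← map_sub]
    exact hU.norm_integral_le j _ t
  refine tendsto_nhds_unique h1 (h2.congr fun k => ?_)
  rw [hU.sub_eq_integral (h k)]

lemma avg_commute (hU : IsIsomGroups U) (h : ℝ) (j : Fin n) (X : E →L[ℂ] E)
    (hX : ∀ t, Commute (U j t) X) : Commute (hU.avg h j) X := by
  have hc : ∀ t g, U j t (X g) = X (U j t g) := fun t g =>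
    congrArg (fun Y : E →L[ℂ] E => Y g) (hX t).eq
  refine ContinuousLinearMap.ext fun g => ?_
  rw [mul_apply_eq_comp, mul_apply_eq_comp, avg_apply, avg_apply]
  simp_rw [hc]
  rw [ContinuousLinearMap.intervalIntegral_comp_comm X (hU.intervalIntegrable j g 0 h)]
  exact ((X.restrictScalars ℝ).map_smul _ _).symm

lemma genDeriv_avg (hU : IsIsomGroups U) (h : ℝ) (j : Fin n) (g : E) :
    GenDeriv (U j) (hU.avg h j g) (h⁻¹ • (U j h - 1) g) := by
  apply hU.genDeriv_of_hasDerivAt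
  have hkey : (fun t => U j t (hU.avg h j g)) = fun t =>
      h⁻¹ • ((∫ τ in (0 : ℝ)..(t + h), U j τ g) - ∫ τ in (0 : ℝ)..t, U j τ g) := by
    funext t
    rw [avg_apply]
    have : U j t (h⁻¹ • ∫ τ in (0 : ℝ)..h, U j τ g)
        = h⁻¹ • U j t (∫ τ in (0 : ℝ)..h, U j τ g) :=
      ((U j t).restrictScalars ℝ).map_smul _ _
    rw [this, ← ContinuousLinearMap.intervalIntegral_comp_comm (U j t)
      (hU.intervalIntegrable j g 0 h),
      intervalIntegral.integral_interval_sub_left (hU.intervalIntegrable j g _ _)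
        (hU.intervalIntegrable j g _ _)]
    have h3 : ∀ τ, U j t (U j τ g) = U j (t + τ) g := fun τ => by
      rw [hU.add, mul_apply_eq_comp]
    simp_rw [h3]
    rw [intervalIntegral.integral_comp_add_left (fun τ => U j τ g), add_zero]
  rw [hkey]
  have h1 : ∀ b, HasDerivAt (fun t => ∫ τ in (0 : ℝ)..t, U j τ g) (U j b g) b := fun b =>
    (hU.cont j g).integral_hasStrictDerivAt 0 b |>.hasDerivAt
  have h2 : HasDerivAt (fun t => ∫ τ in (0 : ℝ)..(t + h), U j τ g) (U j h g) 0 := by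
    have := h1 (0 + h)
    simpa using this.comp_add_const 0 h
  have h3 := (h2.sub (h1 0)).const_smul h⁻¹
  rw [hU.zero] at h3
  exact h3

/-- The mean over `τ ∈ [0,h]` of `(U_j(τ) - I) g` is bounded by any uniform bound. -/
lemma norm_one_sub_avg_le (hU : IsIsomGroups U) {h : ℝ} (hh : 0 < h) (j : Fin n) (g : E)
    {M : ℝ} (hM : ∀ τ ∈ Set.Icc 0 h, ‖(U j τ - 1) g‖ ≤ M) : ‖(1 - hU.avg h j) g‖ ≤ M := by
  have h1 : (1 - hU.avg h j) g = -(h⁻¹ • ∫ τ in (0 : ℝ)..h, (U j τ - 1) g) := by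
    have h2 : ∀ τ, (U j τ - 1) g = U j τ g - g := fun τ => rfl
    have h3 : (1 - hU.avg h j) g = g - hU.avg h j g := rfl
    simp_rw [h2]
    rw [h3, intervalIntegral.integral_sub (hU.intervalIntegrable j g 0 h) (by simp),
      intervalIntegral.integral_const, sub_zero, smul_sub, smul_smul, inv_mul_cancel₀ hh.ne',
      one_smul, avg_apply, neg_sub]
  rw [h1, norm_neg, norm_smul, norm_inv, Real.norm_eq_abs, abs_of_pos hh]
  have h4 := intervalIntegral.norm_integral_le_of_norm_le_const (a := 0) (b := h)
    (f := fun τ => (U j τ - 1) g) (C := M) (fun x hx => by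
      rw [Set.uIoc_of_le hh.le] at hx
      exact hM x ⟨hx.1.le, hx.2⟩)
  rw [sub_zero, abs_of_pos hh] at h4
  calc h⁻¹ * ‖∫ τ in (0 : ℝ)..h, (U j τ - 1) g‖ ≤ h⁻¹ * (M * h) := by gcongr
    _ = M := by field_simp

end IsIsomGroups

/-! ### Mixed differences and smoothing operators -/

/-- The bicommutant of the groups `U_j`, a commutative algebra containing all the operators
built from them below. -/
def bicomm (U : Fin n → ℝ → E →L[ℂ] E) : Subalgebra ℂ (E →L[ℂ] E) :=
  Subalgebra.centralizer ℂ (Set.centralizer {X | ∃ j t, X = U j t})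

lemma mem_bicomm {U : Fin n → ℝ → E →L[ℂ] E} {X : E →L[ℂ] E} :
    X ∈ bicomm U ↔ ∀ Y : E →L[ℂ] E, (∀ j t, Commute (U j t) Y) → Commute X Y := by
  rw [bicomm, Subalgebra.mem_centralizer_iff]
  constructor
  · intro h Y hY
    refine (h Y ?_).symm
    rintro _ ⟨j, t, rfl⟩
    exact hY j t
  · intro h Y hY
    exact (h Y fun j t => hY _ ⟨j, t, rfl⟩).symm

lemma opNorm_one_le : ‖(1 : E →L[ℂ] E)‖ ≤ 1 := ContinuousLinearMap.norm_id_le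

lemma opNorm_mul_le_of_le {X Y : E →L[ℂ] E} {a b : ℝ} (hX : ‖X‖ ≤ a) (hY : ‖Y‖ ≤ b) :
    ‖X * Y‖ ≤ a * b :=
  (norm_mul_le X Y).trans (mul_le_mul hX hY (norm_nonneg _) ((norm_nonneg _).trans hX))

lemma opNorm_pow_le {X : E →L[ℂ] E} {a : ℝ} (hX : ‖X‖ ≤ a) (k : ℕ) : ‖X ^ k‖ ≤ a ^ k := by
  induction k with
  | zero => simpa using opNorm_one_le
  | succ k ih =>
    rw [pow_succ, pow_succ]
    exact opNorm_mul_le_of_le ih hX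

/-- The mixed difference `(U_{j₁}(τ₁) - I)⋯(U_{j_r}(τ_r) - I)`. -/
def diffProd (U : Fin n → ℝ → E →L[ℂ] E) {r : ℕ} (J : Fin r → Fin n) (τ : Fin r → ℝ) :
    E →L[ℂ] E :=
  (List.ofFn fun i => U (J i) (τ i) - 1).prod

lemma diffProd_succ (U : Fin n → ℝ → E →L[ℂ] E) {r : ℕ} (J : Fin (r + 1) → Fin n)
    (τ : Fin (r + 1) → ℝ) :
    diffProd U J τ = (U (J 0) (τ 0) - 1) * diffProd U (fun i => J i.succ) (fun i => τ i.succ) := by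
  simp [diffProd, List.ofFn_succ]

namespace IsIsomGroups

variable {U : Fin n → ℝ → E →L[ℂ] E}

lemma mem_bicomm (_hU : IsIsomGroups U) (j : Fin n) (t : ℝ) : U j t ∈ bicomm U :=
  _root_.mem_bicomm.2 fun _ hY => hY j t

lemma commute_of_mem (hU : IsIsomGroups U) {X Y : E →L[ℂ] E} (hX : X ∈ bicomm U)
    (hY : Y ∈ bicomm U) : Commute X Y :=
  _root_.mem_bicomm.1 hX Y fun j t =>
    (_root_.mem_bicomm.1 hY (U j t) fun i s => hU.comm i j s t).symm

lemma diffProd_mem (hU : IsIsomGroups U) {r : ℕ} (J : Fin r → Fin n) (τ : Fin r → ℝ) :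
    diffProd U J τ ∈ bicomm U := by
  refine Subalgebra.list_prod_mem _ fun X hX => ?_
  obtain ⟨i, rfl⟩ := (List.mem_ofFn' _ _).1 hX
  exact Subalgebra.sub_mem _ (hU.mem_bicomm _ _) (Subalgebra.one_mem _)

lemma norm_diffProd_le (hU : IsIsomGroups U) {r : ℕ} (J : Fin r → Fin n) (τ : Fin r → ℝ) (f : E) :
    ‖diffProd U J τ f‖ ≤ 2 ^ r * ‖f‖ := by
  induction r with
  | zero => simp [diffProd]
  | succ r ih =>
    rw [diffProd_succ, mul_apply_eq_comp]
    calc _ ≤ 2 * ‖diffProd U (fun i => J i.succ) (fun i => τ i.succ) f‖ := hU.norm_diff_le _ _ _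
      _ ≤ 2 * (2 ^ r * ‖f‖) := by gcongr; exact ih _ _
      _ = _ := by ring

lemma bddAbove_diffProd (hU : IsIsomGroups U) {r : ℕ} (J : Fin r → Fin n) (s : ℝ) (f : E) :
    BddAbove ((fun τ : Fin r → ℝ => ‖diffProd U J τ f‖) '' Set.univ.pi fun _ => Set.Icc 0 s) := by
  refine ⟨2 ^ r * ‖f‖, ?_⟩
  rintro _ ⟨τ, _, rfl⟩
  exact hU.norm_diffProd_le J τ f

lemma mixedMod_eq (r : ℕ) (s : ℝ) (f : E) : mixedMod U r s f = ∑ J : Fin r → Fin n,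
    sSup ((fun τ : Fin r → ℝ => ‖diffProd U J τ f‖) '' Set.univ.pi fun _ => Set.Icc 0 s) := rfl

lemma mixedMod_mono (hU : IsIsomGroups U) (r : ℕ) (f : E) :
    Monotone fun s => mixedMod U r s f := by
  intro s t hst
  simp only [mixedMod_eq]
  refine Finset.sum_le_sum fun J _ => ?_
  rcases Set.eq_empty_or_nonempty
    ((fun τ : Fin r → ℝ => ‖diffProd U J τ f‖) '' Set.univ.pi fun _ => Set.Icc 0 s) with h | h
  · rw [h, Real.sSup_empty]
    refine Real.sSup_nonneg ?_
    rintro _ ⟨τ, _, rfl⟩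
    exact norm_nonneg _
  · exact csSup_le_csSup (hU.bddAbove_diffProd J t f) h
      (Set.image_mono (Set.pi_mono fun _ _ => Set.Icc_subset_Icc_right hst))

lemma mixedMod_nonneg (r : ℕ) (s : ℝ) (f : E) : 0 ≤ mixedMod U r s f := by
  rw [mixedMod_eq]
  refine Finset.sum_nonneg fun J _ => Real.sSup_nonneg ?_
  rintro _ ⟨τ, _, rfl⟩
  exact norm_nonneg _

lemma norm_prod_avg_le (hU : IsIsomGroups U) (h : ℝ) (l : List (Fin n)) :
    ‖(l.map (hU.avg h)).prod‖ ≤ 1 := by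
  induction l with
  | nil => simpa using opNorm_one_le
  | cons j l ih =>
    rw [List.map_cons, List.prod_cons]
    simpa using opNorm_mul_le_of_le (hU.norm_avg_le h j) ih

/-- The Steklov mean over the cube `[0,h]ⁿ`. -/
def cubeAvg (hU : IsIsomGroups U) (h : ℝ) : E →L[ℂ] E :=
  ((List.finRange n).map (hU.avg h)).prod

lemma norm_cubeAvg_le (hU : IsIsomGroups U) (h : ℝ) : ‖hU.cubeAvg h‖ ≤ 1 :=
  hU.norm_prod_avg_le h _

lemma norm_one_sub_prod_avg_le (hU : IsIsomGroups U) (h : ℝ) (l : List (Fin n)) (g : E) :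
    ‖(1 - (l.map (hU.avg h)).prod) g‖ ≤ (l.map fun j => ‖(1 - hU.avg h j) g‖).sum := by
  induction l with
  | nil => simp
  | cons j l ih =>
    rw [List.map_cons, List.prod_cons, List.map_cons, List.sum_cons]
    set Q := (l.map (hU.avg h)).prod
    have : (1 - hU.avg h j * Q) g = (1 - hU.avg h j) g + hU.avg h j ((1 - Q) g) := by
      rw [← mul_apply_eq_comp, ← add_apply]
      congr 1
      noncomm_ring
    rw [this]
    refine (norm_add_le _ _).trans (add_le_add le_rfl (le_trans ?_ ih))
    simpa using (hU.avg h j).le_of_opNorm_le (hU.norm_avg_le h j) ((1 - Q) g)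

lemma norm_one_sub_cubeAvg_le (hU : IsIsomGroups U) (h : ℝ) (g : E) :
    ‖(1 - hU.cubeAvg h) g‖ ≤ ∑ j, ‖(1 - hU.avg h j) g‖ := by
  have := hU.norm_one_sub_prod_avg_le h (List.finRange n) g
  rwa [← List.ofFn_eq_map (f := fun j => ‖(1 - hU.avg h j) g‖), List.sum_ofFn] at this

variable [CompleteSpace E]

lemma avg_mem (hU : IsIsomGroups U) (h : ℝ) (j : Fin n) : hU.avg h j ∈ bicomm U :=
  _root_.mem_bicomm.2 fun Y hY => hU.avg_commute h j Y (hY j)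

/-- Averaging each step of a mixed difference over `[0,h]` does not increase a uniform bound. -/
lemma norm_prod_one_sub_avg_le (hU : IsIsomGroups U) {h : ℝ} (hh : 0 < h) {r : ℕ}
    (J : Fin r → Fin n) (f : E) {M : ℝ}
    (hM : ∀ τ : Fin r → ℝ, (∀ i, τ i ∈ Set.Icc 0 h) → ‖diffProd U J τ f‖ ≤ M) :
    ‖(List.ofFn fun i => 1 - hU.avg h (J i)).prod f‖ ≤ M := by
  induction r generalizing f with
  | zero => simpa [diffProd] using hM (fun _ => 0) (fun i => i.elim0)
  | succ r ih =>
    rw [List.ofFn_succ, List.prod_cons, mul_apply_eq_comp]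
    apply hU.norm_one_sub_avg_le hh
    intro σ hσ
    have hmem : (List.ofFn fun i : Fin r => 1 - hU.avg h (J i.succ)).prod ∈ bicomm U := by
      refine Subalgebra.list_prod_mem _ fun X hX => ?_
      obtain ⟨i, rfl⟩ := (List.mem_ofFn' _ _).1 hX
      exact Subalgebra.sub_mem _ (Subalgebra.one_mem _) (hU.avg_mem _ _)
    have hmem' : U (J 0) σ - 1 ∈ bicomm U :=
      Subalgebra.sub_mem _ (hU.mem_bicomm _ _) (Subalgebra.one_mem _)
    have hc := (hU.commute_of_mem hmem' hmem).eq
    rw [← mul_apply_eq_comp, hc, mul_apply_eq_comp]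
    refine ih _ _ fun τ hτ => ?_
    have := hM (Fin.cons σ τ) (fun i => by
      refine Fin.cases ?_ (fun i => ?_) i
      · simpa using hσ
      · simpa using hτ i)
    rw [diffProd_succ] at this
    simp only [Fin.cons_zero, Fin.cons_succ] at this
    rwa [(hU.commute_of_mem hmem' (hU.diffProd_mem _ _)).eq, mul_apply_eq_comp] at this

lemma prod_avg_mem (hU : IsIsomGroups U) (h : ℝ) (l : List (Fin n)) :
    (l.map (hU.avg h)).prod ∈ bicomm U := by
  refine Subalgebra.list_prod_mem _ fun X hX => ?_
  obtain ⟨i, _, rfl⟩ := List.mem_map.1 hX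
  exact hU.avg_mem _ _

lemma cubeAvg_mem (hU : IsIsomGroups U) (h : ℝ) : hU.cubeAvg h ∈ bicomm U :=
  hU.prod_avg_mem h _

lemma norm_one_sub_cubeAvg_pow_le_sum (hU : IsIsomGroups U) (h : ℝ) (r : ℕ) (f : E) :
    ‖((1 - hU.cubeAvg h) ^ r) f‖ ≤
      ∑ J : Fin r → Fin n, ‖(List.ofFn fun i => 1 - hU.avg h (J i)).prod f‖ := by
  induction r generalizing f with
  | zero => simp
  | succ r ih =>
    have hP : 1 - hU.cubeAvg h ∈ bicomm U :=
      Subalgebra.sub_mem _ (Subalgebra.one_mem _) (hU.prod_avg_mem _ _)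
    rw [← (Fin.consEquiv fun _ => Fin n).sum_comp, Fintype.sum_prod_type, Finset.sum_comm, pow_succ,
      mul_apply_eq_comp]
    refine (ih _).trans (Finset.sum_le_sum fun J _ => ?_)
    have hmem : (List.ofFn fun i : Fin r => 1 - hU.avg h (J i)).prod ∈ bicomm U := by
      refine Subalgebra.list_prod_mem _ fun X hX => ?_
      obtain ⟨i, rfl⟩ := (List.mem_ofFn' _ _).1 hX
      exact Subalgebra.sub_mem _ (Subalgebra.one_mem _) (hU.avg_mem _ _)
    rw [← mul_apply_eq_comp, (hU.commute_of_mem hmem hP).eq, mul_apply_eq_comp]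
    refine (hU.norm_one_sub_cubeAvg_le h _).trans (Finset.sum_le_sum fun j _ => le_of_eq ?_)
    rw [List.ofFn_succ, List.prod_cons, mul_apply_eq_comp]
    simp [Fin.consEquiv]

/-- The operators `I - P_h` (`P_h` the cube mean) raised to the power `r` are controlled by the
mixed modulus, whose independent steps `τ₁,…,τ_r` match the independent averages. -/
lemma norm_one_sub_cubeAvg_pow_le (hU : IsIsomGroups U) {h : ℝ} (hh : 0 < h) (r : ℕ) (f : E) :
    ‖((1 - hU.cubeAvg h) ^ r) f‖ ≤ mixedMod U r h f := by
  refine (hU.norm_one_sub_cubeAvg_pow_le_sum h r f).trans ?_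
  rw [mixedMod_eq]
  refine Finset.sum_le_sum fun J _ => ?_
  refine hU.norm_prod_one_sub_avg_le hh J f fun τ hτ => ?_
  exact le_csSup (hU.bddAbove_diffProd J h f) ⟨τ, fun i _ => hτ i, rfl⟩

lemma exists_genDeriv_prod_avg (hU : IsIsomGroups U) {h : ℝ} (hh : 0 < h) (j : Fin n)
    (l : List (Fin n)) (hj : j ∈ l) :
    ∃ D ∈ bicomm U, ‖D‖ ≤ 2 * h⁻¹ ∧ ∀ g, GenDeriv (U j) ((l.map (hU.avg h)).prod g) (D g) := by
  induction l with
  | nil => simp at hj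
  | cons i l ih =>
    rw [List.map_cons, List.prod_cons]
    by_cases hij : j = i
    · subst hij
      refine ⟨(((h⁻¹ : ℝ) : ℂ) • (U j h - 1)) * (l.map (hU.avg h)).prod, ?_, ?_, fun g => ?_⟩
      · exact Subalgebra.mul_mem _ (Subalgebra.smul_mem _
          (Subalgebra.sub_mem _ (hU.mem_bicomm _ _) (Subalgebra.one_mem _)) _)
          (hU.prod_avg_mem _ _)
      · have h1 : ‖((h⁻¹ : ℝ) : ℂ) • (U j h - 1)‖ ≤ 2 * h⁻¹ := by
          rw [norm_smul, Complex.norm_real, Real.norm_eq_abs, abs_of_pos (inv_pos.2 hh), mul_comm]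
          gcongr
          refine ContinuousLinearMap.opNorm_le_bound _ (by norm_num) fun g => hU.norm_diff_le _ _ _
        simpa using opNorm_mul_le_of_le h1 (hU.norm_prod_avg_le h l)
      · exact hU.genDeriv_avg h j _
    · obtain ⟨D, hD, hDn, hDg⟩ := ih (by simpa [hij] using hj)
      refine ⟨hU.avg h i * D, Subalgebra.mul_mem _ (hU.avg_mem _ _) hD, ?_, fun g => ?_⟩
      · simpa using opNorm_mul_le_of_le (hU.norm_avg_le h i) hDn
      · exact (hDg g).map _ fun t => hU.commute_of_mem (hU.mem_bicomm _ _) (hU.avg_mem _ _)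

/-- `P_h^k` maps into the domain of every product of `k` generators, with norm `O(h^{-k})`. -/
lemma exists_isIterDeriv_cubeAvg_pow (hU : IsIsomGroups U) {h : ℝ} (hh : 0 < h)
    (L : List (Fin n)) :
    ∃ D ∈ bicomm U, ‖D‖ ≤ (2 * h⁻¹) ^ L.length ∧
      ∀ g, IsIterDeriv U L ((hU.cubeAvg h ^ L.length) g) (D g) := by
  induction L with
  | nil => exact ⟨1, Subalgebra.one_mem _, by simpa using opNorm_one_le, fun g => rfl⟩
  | cons j L ih =>
    obtain ⟨D, hD, hDn, hDg⟩ := ih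
    obtain ⟨D', hD', hDn', hDg'⟩ :=
      hU.exists_genDeriv_prod_avg hh j (List.finRange n) (List.mem_finRange j)
    refine ⟨D' * D, Subalgebra.mul_mem _ hD' hD, ?_, fun g => ?_⟩
    · rw [List.length_cons, pow_succ']
      exact opNorm_mul_le_of_le hDn' hDn
    · refine ⟨D (hU.cubeAvg h g), ?_, ?_⟩
      · rw [List.length_cons, pow_succ, mul_apply_eq_comp]
        exact hDg _
      · rw [← mul_apply_eq_comp, (hU.commute_of_mem hD (hU.cubeAvg_mem _)).eq]
        exact hDg' _

/-- Smoothing operators `A = I - (I - P_h^N)^r`: they approximate the identity to the accuracy of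
the `r`-th mixed modulus (since `I - P_h^N` is divisible by `I - P_h`) and they gain `N`
derivatives (since `A` is divisible by `P_h^N`). -/
lemma exists_smoothing (hU : IsIsomGroups U) (N r : ℕ) : ∃ C : ℝ, 0 < C ∧ ∀ h : ℝ, 0 < h →
    ∃ A ∈ bicomm U, ‖A‖ ≤ C ∧ (∀ f, ‖f - A f‖ ≤ C * mixedMod U r h f) ∧
      ∀ L : List (Fin n), L.length ≤ N → ∃ D : E →L[ℂ] E, ‖D‖ ≤ C * h⁻¹ ^ L.length ∧
        ∀ g, IsIterDeriv U L (A g) (D g) := by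
  set K : ℝ := ∑ i ∈ Finset.range r, 2 ^ i with hK
  have hK0 : 0 ≤ K := Finset.sum_nonneg fun i _ => by positivity
  have h2N : (1 : ℝ) ≤ 2 ^ N := one_le_pow₀ (by norm_num)
  refine ⟨1 + (N : ℝ) ^ r + 2 ^ N * K, by positivity, fun h hh => ?_⟩
  set P := hU.cubeAvg h with hP
  have hPm : P ∈ bicomm U := hU.cubeAvg_mem _
  have hPn : ∀ k, ‖P ^ k‖ ≤ 1 := fun k => by
    simpa using opNorm_pow_le (hU.norm_cubeAvg_le h) k
  set S := ∑ i ∈ Finset.range r, (1 - P ^ N) ^ i with hS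
  have hSm : S ∈ bicomm U := Subalgebra.sum_mem _ fun i _ => Subalgebra.pow_mem _
    (Subalgebra.sub_mem _ (Subalgebra.one_mem _) (Subalgebra.pow_mem _ hPm _)) _
  have hSn : ‖S‖ ≤ K := by
    refine norm_sum_le_of_le _ fun i _ => opNorm_pow_le ?_ i
    refine (norm_sub_le _ _).trans ?_
    have := hPn N
    have := opNorm_one_le (E := E)
    linarith
  refine ⟨P ^ N * S, Subalgebra.mul_mem _ (Subalgebra.pow_mem _ hPm _) hSm, ?_, fun f => ?_,
    fun L hL => ?_⟩
  · have h1 : ‖P ^ N * S‖ ≤ 1 * K := opNorm_mul_le_of_le (hPn N) hSn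
    have h2 : K ≤ 2 ^ N * K := le_mul_of_one_le_left hK0 h2N
    have h3 : (0 : ℝ) ≤ (N : ℝ) ^ r := by positivity
    linarith
  · set Q := ∑ i ∈ Finset.range N, P ^ i with hQ
    have hQn : ‖Q‖ ≤ N := by
      refine (norm_sum_le_of_le _ fun i _ => hPn i).trans ?_
      simp
    have hQm : Q ∈ bicomm U := Subalgebra.sum_mem _ fun i _ => Subalgebra.pow_mem _ hPm _
    have h1 : f - (P ^ N * S) f = (Q ^ r) (((1 - P) ^ r) f) := by
      have h2 : P ^ N * S = 1 - (1 - P ^ N) ^ r := by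
        rw [← mul_neg_geom_sum, ← hS, _root_.sub_sub_cancel]
      have h3 : (1 - P ^ N) ^ r = Q ^ r * (1 - P) ^ r := by
        rw [← mul_neg_geom_sum, ← hQ, (hU.commute_of_mem (Subalgebra.sub_mem _
          (Subalgebra.one_mem _) hPm) hQm).eq, Commute.mul_pow]
        exact hU.commute_of_mem hQm (Subalgebra.sub_mem _ (Subalgebra.one_mem _) hPm)
      rw [← mul_apply_eq_comp, ← h3, h2, sub_apply, one_apply_eq_self, _root_.sub_sub_cancel]
    rw [h1]
    have h0 := mixedMod_nonneg (U := U) r h f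
    calc _ ≤ (N : ℝ) ^ r * ‖((1 - P) ^ r) f‖ :=
          ContinuousLinearMap.le_of_opNorm_le _ (opNorm_pow_le hQn r) _
      _ ≤ (N : ℝ) ^ r * mixedMod U r h f := by
          gcongr
          exact hU.norm_one_sub_cubeAvg_pow_le hh r f
      _ ≤ _ := by
          gcongr
          have : 0 ≤ 2 ^ N * K := by positivity
          linarith
  · obtain ⟨D, _, hDn, hDg⟩ := hU.exists_isIterDeriv_cubeAvg_pow hh L
    refine ⟨D * (P ^ (N - L.length) * S), ?_, fun g => ?_⟩
    · have h1 := opNorm_mul_le_of_le hDn (opNorm_mul_le_of_le (hPn (N - L.length)) hSn)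
      refine h1.trans ?_
      rw [mul_pow, one_mul]
      have h3 : (2 : ℝ) ^ L.length ≤ 2 ^ N := pow_le_pow_right₀ (by norm_num) hL
      have h4 : 0 ≤ h⁻¹ ^ L.length := by positivity
      calc (2 : ℝ) ^ L.length * h⁻¹ ^ L.length * K ≤ 2 ^ N * h⁻¹ ^ L.length * K := by gcongr
        _ = (2 ^ N * K) * h⁻¹ ^ L.length := by ring
        _ ≤ _ := by
          gcongr
          have : (0 : ℝ) ≤ (N : ℝ) ^ r := by positivity
          linarith
    · have h1 : P ^ N * S = P ^ L.length * (P ^ (N - L.length) * S) := by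
        rw [← mul_assoc, ← pow_add, Nat.add_sub_cancel' hL]
      rw [h1, mul_apply_eq_comp, mul_apply_eq_comp]
      exact hDg _

end IsIsomGroups

/-! ### Smooth approximants and existence of derivatives -/

lemma GenDeriv.sub {T : ℝ → E →L[ℂ] E} {f g f' g' : E} (h : GenDeriv T f g)
    (h' : GenDeriv T f' g') : GenDeriv T (f - f') (g - g') := by
  refine (Tendsto.sub h h').congr fun t => ?_
  rw [map_sub, ← smul_sub]
  congr 1
  abel

/-- `G` is a family of smooth approximants of `f`: `G [] h` is within `O(Ω^r(h, f))` of `f`, and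
`G L h = Θ_L (G [] h)` for words `L` of length at most `N`, with the natural bounds on its size and
on the increment between the scales `h` and `h/2`. -/
structure IsApprox (U : Fin n → ℝ → E →L[ℂ] E) (N r : ℕ) (C : ℝ) (f : E)
    (G : List (Fin n) → ℝ → E) : Prop where
  approx : ∀ h, 0 < h → ‖G [] h - f‖ ≤ C * mixedMod U r h f
  bound : ∀ L : List (Fin n), L.length ≤ N → ∀ h, 0 < h →
    ‖G L h‖ ≤ C * h⁻¹ ^ L.length * ‖f‖
  diff : ∀ L : List (Fin n), L.length ≤ N → ∀ h, 0 < h →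
    ‖G L (h * (1 / 2)) - G L h‖ ≤ C * h⁻¹ ^ L.length * mixedMod U r h f
  deriv : ∀ j, ∀ L : List (Fin n), L.length < N → ∀ h, 0 < h →
    GenDeriv (U j) (G L h) (G (j :: L) h)

namespace IsIsomGroups

variable {U : Fin n → ℝ → E →L[ℂ] E} [CompleteSpace E]

/-- The approximants are `A_h² f`. The square makes each increment
`A_{h/2}² f - A_h² f = (A_{h/2} + A_h)(A_{h/2} - A_h) f` a smoothing operator applied to a
vector of size `O(Ω^r(h, f))`. -/
lemma exists_isApprox (hU : IsIsomGroups U) (N r : ℕ) :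
    ∃ C : ℝ, 0 < C ∧ ∀ f, ∃ G, IsApprox U N r C f G := by
  obtain ⟨C, hC, H⟩ := hU.exists_smoothing N r
  choose! A hAm hAn hAf H using H
  choose! D hDn hDg using H
  refine ⟨C + C * C + (C * 2 ^ N + C) * (2 * C), by positivity, fun f =>
    ⟨fun L h => D h L (A h f), ?_, ?_, ?_, ?_⟩⟩
  · intro h hh
    have h0 := mixedMod_nonneg (U := U) r h f
    have h1 : ∀ g, D h [] g = A h g := fun g => hDg h hh [] (Nat.zero_le _) g
    have h2 : D h [] (A h f) - f = -((f - A h f) + A h (f - A h f)) := by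
      rw [h1, map_sub]; abel
    rw [h2, norm_neg]
    calc _ ≤ ‖f - A h f‖ + ‖A h (f - A h f)‖ := norm_add_le _ _
      _ ≤ C * mixedMod U r h f + C * (C * mixedMod U r h f) :=
        add_le_add (hAf h hh f) (((A h).le_of_opNorm_le (hAn h hh) _).trans
          (mul_le_mul_of_nonneg_left (hAf h hh f) hC.le))
      _ = (C + C * C) * mixedMod U r h f := by ring
      _ ≤ _ := mul_le_mul_of_nonneg_right (le_add_of_nonneg_right (by positivity)) h0
  · intro L hL h hh
    calc _ ≤ C * h⁻¹ ^ L.length * (C * ‖f‖) :=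
          ((D h L).le_of_opNorm_le (hDn h hh L hL) _).trans
            (mul_le_mul_of_nonneg_left ((A h).le_of_opNorm_le (hAn h hh) _) (by positivity))
      _ = (C * C) * h⁻¹ ^ L.length * ‖f‖ := by ring
      _ ≤ _ := by
        gcongr
        have : 0 ≤ (C * 2 ^ N + C) * (2 * C) := by positivity
        linarith
  · intro L hL h hh
    have hh' : 0 < h * (1 / 2) := by positivity
    set h' := h * (1 / 2) with hh'_def
    have h0 := mixedMod_nonneg (U := U) r h f
    set y := A h' f - A h f with hy
    have hcomm : D h' L (A h f) = D h L (A h' f) := by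
      have e1 := hDg h' hh' L hL (A h f)
      have e2 := hDg h hh L hL (A h' f)
      rw [← mul_apply_eq_comp, (hU.commute_of_mem (hAm h' hh') (hAm h hh)).eq,
        mul_apply_eq_comp] at e1
      exact e1.unique e2
    have hsplit : D h' L (A h' f) - D h L (A h f) = D h' L y + D h L y := by
      rw [hy, map_sub, map_sub, hcomm]; abel
    have hyn : ‖y‖ ≤ 2 * C * mixedMod U r h f := by
      have e : y = (f - A h f) - (f - A h' f) := by rw [hy]; abel
      have hmono : mixedMod U r h' f ≤ mixedMod U r h f :=
        hU.mixedMod_mono r f (by rw [hh'_def]; linarith)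
      rw [e]
      calc _ ≤ ‖f - A h f‖ + ‖f - A h' f‖ := norm_sub_le _ _
        _ ≤ C * mixedMod U r h f + C * mixedMod U r h f :=
          add_le_add (hAf h hh f) ((hAf h' hh' f).trans (mul_le_mul_of_nonneg_left hmono hC.le))
        _ = _ := by ring
    have hD' : ‖D h' L‖ ≤ C * 2 ^ N * h⁻¹ ^ L.length := by
      refine (hDn h' hh' L hL).trans ?_
      have e : h'⁻¹ = 2 * h⁻¹ := by rw [hh'_def]; field_simp
      rw [e, mul_pow, ← mul_assoc]
      gcongr
      norm_num
    rw [hsplit]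
    calc _ ≤ ‖D h' L y‖ + ‖D h L y‖ := norm_add_le _ _
      _ ≤ C * 2 ^ N * h⁻¹ ^ L.length * (2 * C * mixedMod U r h f) +
          C * h⁻¹ ^ L.length * (2 * C * mixedMod U r h f) :=
        add_le_add ((ContinuousLinearMap.le_of_opNorm_le _ hD' _).trans (by gcongr))
          ((ContinuousLinearMap.le_of_opNorm_le _ (hDn h hh L hL) _).trans (by gcongr))
      _ = ((C * 2 ^ N + C) * (2 * C)) * h⁻¹ ^ L.length * mixedMod U r h f := by ring
      _ ≤ _ := by
        gcongr
        exact le_add_of_nonneg_left (by positivity)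
  · intro j L hL h hh
    obtain ⟨k, hk, hd⟩ := hDg h hh (j :: L) (by simpa using hL) (A h f)
    rwa [hk.unique (hDg h hh L hL.le (A h f))] at hd

end IsIsomGroups

lemma inv_pow_mul_rpow {h : ℝ} (hh : 0 < h) (k : ℕ) (α : ℝ) : h⁻¹ ^ k * h ^ α = h ^ (α - k) := by
  rw [Real.rpow_sub_natCast hh.ne', inv_pow]
  field_simp

lemma mul_half_pow_rpow {s : ℝ} (hs : 0 < s) (d : ℕ) (γ : ℝ) :
    (s * (1 / 2) ^ d) ^ γ = s ^ γ * ((1 / 2 : ℝ) ^ γ) ^ d := by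
  rw [Real.mul_rpow hs.le (by positivity), Real.rpow_pow_comm (by norm_num)]

section Lift

variable {U : Fin n → ℝ → E →L[ℂ] E} {m r : ℕ} {C α M : ℝ} {f : E}
  {G : List (Fin n) → ℝ → E}

lemma IsApprox.dist_le {N : ℕ} (hG : IsApprox U N r C f G) (hmN : m ≤ N) (hC : 0 < C)
    (hM : 0 ≤ M) (hω : ∀ h, 0 < h → mixedMod U r h f ≤ M * h ^ α)
    {L : List (Fin n)} (hL : L.length ≤ m) {s : ℝ} (hs : 0 < s) (d : ℕ) :
    dist (G L (s * (1 / 2) ^ d)) (G L (s * (1 / 2) ^ (d + 1))) ≤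
      (C * M * s ^ (α - L.length)) * ((1 / 2 : ℝ) ^ (α - m)) ^ d := by
  have hh : 0 < s * (1 / 2) ^ d := by positivity
  rw [dist_comm, dist_eq_norm, pow_succ, ← mul_assoc]
  refine (hG.diff L (hL.trans hmN) _ hh).trans ?_
  calc _ ≤ C * (s * (1 / 2) ^ d)⁻¹ ^ L.length * (M * (s * (1 / 2) ^ d) ^ α) := by
        gcongr
        exact hω _ hh
    _ = C * M * ((s * (1 / 2) ^ d)⁻¹ ^ L.length * (s * (1 / 2) ^ d) ^ α) := by ring
    _ = C * M * s ^ (α - L.length) * ((1 / 2 : ℝ) ^ (α - L.length)) ^ d := by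
        rw [inv_pow_mul_rpow hh, mul_half_pow_rpow hs]; ring
    _ ≤ _ := by
        have hLm : (L.length : ℝ) ≤ m := by exact_mod_cast hL
        have hle : (1 / 2 : ℝ) ^ (α - L.length) ≤ (1 / 2) ^ (α - m) :=
          Real.rpow_le_rpow_of_exponent_ge (by norm_num) (by norm_num) (by linarith)
        exact mul_le_mul_of_nonneg_left (pow_le_pow_left₀ (by positivity) hle d) (by positivity)

lemma half_rpow_lt_one {γ : ℝ} (hγ : 0 < γ) : (1 / 2 : ℝ) ^ γ < 1 :=
  Real.rpow_lt_one (by norm_num) (by norm_num) hγ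

/-- The bound on `Θ_L f` obtained by summing the increments along the scales `2⁻ᵈ`. -/
lemma IsApprox.norm_le_of_tendsto (hG : IsApprox U (m + 1) r C f G)
    (hC : 0 < C) (hM : 0 ≤ M) (hmα : (m : ℝ) < α)
    (hω : ∀ h, 0 < h → mixedMod U r h f ≤ M * h ^ α) {L : List (Fin n)} (hL : L.length ≤ m)
    {g : E} (hg : ∀ s, 0 < s → Tendsto (fun d : ℕ => G L (s * (1 / 2) ^ d)) atTop (𝓝 g)) :
    ‖g‖ ≤ C * ‖f‖ + C * M / (1 - (1 / 2 : ℝ) ^ (α - m)) := by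
  have h1 := dist_le_of_le_geometric_of_tendsto₀ _ _ (half_rpow_lt_one (sub_pos.2 hmα))
    (fun d => hG.dist_le (m := m) (Nat.le_succ m) hC hM hω hL one_pos d) (hg 1 one_pos)
  have h2 := hG.bound L (hL.trans (Nat.le_succ m)) 1 one_pos
  simp only [pow_zero, mul_one, Real.one_rpow, inv_one, one_pow] at h1 h2
  rw [dist_eq_norm] at h1
  have h3 : ‖g‖ ≤ ‖G L 1‖ + ‖G L 1 - g‖ := by
    rw [← norm_neg (G L 1 - g), neg_sub]
    exact norm_le_insert' g (G L 1)
  linarith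

variable [CompleteSpace E]

/-- If `Ω^r(h, f) = O(h^α)` with `α > m`, then `f` lies in the domain of every product of at most
`m` generators, because the derivatives of the approximants converge geometrically. -/
lemma IsApprox.exists_isIterDeriv (hU : IsIsomGroups U) (hG : IsApprox U (m + 1) r C f G)
    (hC : 0 < C) (hM : 0 ≤ M) (hα : 0 < α) (hmα : (m : ℝ) < α)
    (hω : ∀ h, 0 < h → mixedMod U r h f ≤ M * h ^ α) (L : List (Fin n)) (hL : L.length ≤ m) :
    ∃ g, IsIterDeriv U L f g ∧
      ∀ s, 0 < s → Tendsto (fun d : ℕ => G L (s * (1 / 2) ^ d)) atTop (𝓝 g) := by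
  induction L with
  | nil =>
    refine ⟨f, rfl, fun s hs => ?_⟩
    rw [tendsto_iff_norm_sub_tendsto_zero]
    have hlim : Tendsto (fun d : ℕ => C * M * s ^ α * ((1 / 2 : ℝ) ^ α) ^ d) atTop (𝓝 0) := by
      simpa using (tendsto_pow_atTop_nhds_zero_of_lt_one (by positivity)
        (half_rpow_lt_one hα)).const_mul (C * M * s ^ α)
    refine squeeze_zero (fun _ => norm_nonneg _) (fun d => ?_) hlim
    have hh : 0 < s * (1 / 2) ^ d := by positivity
    calc _ ≤ C * (M * (s * (1 / 2) ^ d) ^ α) :=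
          (hG.approx _ hh).trans (mul_le_mul_of_nonneg_left (hω _ hh) hC.le)
      _ = _ := by rw [mul_half_pow_rpow hs]; ring
  | cons j L ih =>
    obtain ⟨k, hk, hlim⟩ := ih (by simp only [List.length_cons] at hL; omega)
    have hex : ∀ s, 0 < s → ∃ g, Tendsto (fun d : ℕ => G (j :: L) (s * (1 / 2) ^ d)) atTop (𝓝 g) ∧
        GenDeriv (U j) k g := fun s hs => by
      obtain ⟨g, hg⟩ := cauchySeq_tendsto_of_complete (cauchySeq_of_le_geometric _ _
        (half_rpow_lt_one (sub_pos.2 hmα)) fun d =>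
          hG.dist_le (m := m) (Nat.le_succ m) hC hM hω hL hs d)
      refine ⟨g, hg, hU.genDeriv_of_tendsto (hlim s hs) hg fun d => hG.deriv j L ?_ _ ?_⟩
      · simp only [List.length_cons] at hL; omega
      · positivity
    obtain ⟨g, hg, hkg⟩ := hex 1 one_pos
    refine ⟨g, ⟨k, hk, hkg⟩, fun s hs => ?_⟩
    obtain ⟨g', hg', hkg'⟩ := hex s hs
    rwa [hkg.unique hkg']

/-- First-order differences of `g = Θ_L f`, `|L| = m`, are estimated by telescoping the approximants
along the scales `2^i s`, `i ∈ ℤ`: at scales below `s` the trivial bound `2‖·‖` is used, at scales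
above `s` one more derivative. -/
lemma IsApprox.norm_diff_le (hU : IsIsomGroups U) (hG : IsApprox U (m + 1) r C f G)
    {L : List (Fin n)} (hL : L.length = m)
    {g : E} (hg : ∀ s, 0 < s → Tendsto (fun d : ℕ => G L (s * (1 / 2) ^ d)) atTop (𝓝 g))
    {s : ℝ} (hs : 0 < s) (j : Fin n) {τ : ℝ} (hτ : τ ∈ Set.Icc 0 s) :
    ENNReal.ofReal ‖(U j τ - 1) g‖ ≤
      (∑' d : ℕ, ENNReal.ofReal (2 * C * (s * (1 / 2) ^ d)⁻¹ ^ m *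
        mixedMod U r (s * (1 / 2) ^ d) f)) +
      ∑' d : ℕ, ENNReal.ofReal (C * s * (s * 2 ^ (d + 1))⁻¹ ^ (m + 1) *
        mixedMod U r (s * 2 ^ (d + 1)) f) := by
  set X := U j τ - 1 with hX
  have hlen : L.length ≤ m + 1 := by omega
  have hlen' : L.length < m + 1 := by omega
  have hsmall := edist_le_tsum_of_edist_le_of_tendsto₀ (f := fun d : ℕ => X (G L (s * (1 / 2) ^ d)))
    (a := X g) (fun d : ℕ => ENNReal.ofReal (2 * C * (s * (1 / 2) ^ d)⁻¹ ^ m *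
        mixedMod U r (s * (1 / 2) ^ d) f)) (fun d => by
      rw [edist_dist]
      refine ENNReal.ofReal_le_ofReal ?_
      rw [dist_comm, dist_eq_norm, ← map_sub]
      refine (hU.norm_diff_le _ _ _).trans ?_
      have h1 := hG.diff L hlen (s * (1 / 2) ^ d) (by positivity)
      rw [mul_assoc, ← pow_succ, hL] at h1
      linarith) ((X.continuous.tendsto g).comp (hg s hs))
  have hzero : Tendsto (fun d : ℕ => X (G L (s * 2 ^ d))) atTop (𝓝 0) := by
    rw [tendsto_zero_iff_norm_tendsto_zero]
    have hlim : Tendsto (fun d : ℕ => s * (C * s⁻¹ ^ (m + 1) * ‖f‖) *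
        ((1 / 2 : ℝ) ^ (m + 1)) ^ d) atTop (𝓝 0) := by
      simpa using (tendsto_pow_atTop_nhds_zero_of_lt_one (by positivity)
        (pow_lt_one₀ (by norm_num) (by norm_num : (1 / 2 : ℝ) < 1) (Nat.succ_ne_zero m))).const_mul
          (s * (C * s⁻¹ ^ (m + 1) * ‖f‖))
    refine squeeze_zero (fun _ => norm_nonneg _) (fun d => ?_) hlim
    have hh : 0 < s * 2 ^ d := by positivity
    refine (hU.norm_sub_le_of_genDeriv (hG.deriv j L hlen' _ hh) τ).trans ?_
    have h1 := hG.bound (j :: L) (by simp [hL]) _ hh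
    rw [List.length_cons, hL] at h1
    calc _ ≤ s * (C * (s * 2 ^ d)⁻¹ ^ (m + 1) * ‖f‖) := by
          gcongr
          rw [abs_of_nonneg hτ.1]
          exact hτ.2
      _ = _ := by
        rw [mul_inv, mul_pow, ← inv_pow, one_div, ← pow_mul, ← pow_mul, mul_comm d]
        ring
  have hlarge := edist_le_tsum_of_edist_le_of_tendsto₀ (f := fun d : ℕ => X (G L (s * 2 ^ d)))
    (a := 0) (fun d : ℕ => ENNReal.ofReal (C * s * (s * 2 ^ (d + 1))⁻¹ ^ (m + 1) *
        mixedMod U r (s * 2 ^ (d + 1)) f)) (fun d => by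
      rw [edist_dist]
      refine ENNReal.ofReal_le_ofReal ?_
      rw [dist_eq_norm, ← map_sub]
      have hh : 0 < s * 2 ^ d := by positivity
      have hh' : 0 < s * 2 ^ (d + 1) := by positivity
      refine (hU.norm_sub_le_of_genDeriv
        ((hG.deriv j L hlen' _ hh).sub (hG.deriv j L hlen' _ hh')) τ).trans ?_
      have h1 := hG.diff (j :: L) (by simp [hL]) _ hh'
      rw [List.length_cons, hL] at h1
      have h2 : s * 2 ^ (d + 1) * (1 / 2) = s * 2 ^ d := by rw [pow_succ]; ring
      rw [h2] at h1
      calc _ ≤ s * (C * (s * 2 ^ (d + 1))⁻¹ ^ (m + 1) * mixedMod U r (s * 2 ^ (d + 1)) f) := by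
            gcongr
            rw [abs_of_nonneg hτ.1]
            exact hτ.2
        _ = _ := by ring) hzero
  simp only [pow_zero, mul_one] at hsmall hlarge
  calc ENNReal.ofReal ‖X g‖ = edist (X g) 0 := by rw [edist_dist, dist_zero_right]
    _ ≤ edist (X (G L s)) (X g) + edist (X (G L s)) 0 := edist_triangle_left _ _ _
    _ ≤ _ := add_le_add hsmall hlarge

end Lift

/-! ### The space `L^q(ds/s)` -/

section HaarLq

/-- The Haar measure `ds/s` of `(0,∞)`. -/
def haarPos : Measure ℝ :=
  (volume.restrict (Set.Ioi (0 : ℝ))).withDensity fun s => ENNReal.ofReal s⁻¹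

/-- The norm of `L^q((0,∞), ds/s)`. -/
def lq (q : ℝ) (F : ℝ → ℝ≥0∞) : ℝ≥0∞ := (∫⁻ s, F s ^ q ∂haarPos) ^ (1 / q)

lemma ae_haarPos : ∀ᵐ s ∂haarPos, 0 < s :=
  (withDensity_absolutelyContinuous _ _).ae_le (ae_restrict_mem measurableSet_Ioi)

lemma lintegral_haarPos (F : ℝ → ℝ≥0∞) :
    ∫⁻ s, F s ∂haarPos = ∫⁻ s in Set.Ioi (0 : ℝ), ENNReal.ofReal s⁻¹ * F s := by
  rw [haarPos, lintegral_withDensity_eq_lintegral_mul_non_measurable _ (by fun_prop)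
    (Eventually.of_forall fun _ => ENNReal.ofReal_lt_top)]
  rfl

lemma setLIntegral_eq_lintegral_haarPos {q : ℝ} (hq : 0 ≤ q) {u : ℝ → ℝ}
    (hu : ∀ s, 0 < s → 0 ≤ u s) :
    ∫⁻ s in Set.Ioi (0 : ℝ), ENNReal.ofReal (u s ^ q / s) =
      ∫⁻ s, ENNReal.ofReal (u s) ^ q ∂haarPos := by
  rw [lintegral_haarPos]
  refine setLIntegral_congr_fun measurableSet_Ioi fun s hs => ?_
  have hs' : 0 < s := hs
  rw [ENNReal.ofReal_rpow_of_nonneg (hu s hs') hq, ← ENNReal.ofReal_mul (inv_nonneg.2 hs'.le)]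
  congr 1
  rw [div_eq_inv_mul]

lemma lintegral_haarPos_comp_mul {c : ℝ} (hc : 0 < c) (F : ℝ → ℝ≥0∞) :
    ∫⁻ s, F (s * c) ∂haarPos = ∫⁻ s, F s ∂haarPos := by
  rw [lintegral_haarPos, lintegral_haarPos]
  have himg : (fun s => s * c) '' Set.Ioi (0 : ℝ) = Set.Ioi 0 := by
    ext x
    constructor
    · rintro ⟨y, hy, rfl⟩
      exact mul_pos hy hc
    · exact fun hx => ⟨x / c, div_pos hx hc, div_mul_cancel₀ _ hc.ne'⟩
  have h := lintegral_image_eq_lintegral_abs_deriv_mul (s := Set.Ioi (0 : ℝ)) measurableSet_Ioi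
    (f := fun s => s * c) (f' := fun _ => c)
    (fun x _ => by simpa using ((hasDerivAt_id x).mul_const c).hasDerivWithinAt)
    ((mul_left_injective₀ hc.ne').injOn) (fun s => ENNReal.ofReal s⁻¹ * F s)
  rw [himg] at h
  rw [h]
  refine setLIntegral_congr_fun measurableSet_Ioi fun s hs => ?_
  have hs' : 0 < s := hs
  rw [← mul_assoc, ← ENNReal.ofReal_mul (abs_nonneg _), abs_of_pos hc]
  congr 2
  field_simp

variable {q : ℝ}

lemma lq_comp_mul {c : ℝ} (hc : 0 < c) (F : ℝ → ℝ≥0∞) : lq q (fun s => F (s * c)) = lq q F := by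
  rw [lq, lq, lintegral_haarPos_comp_mul hc fun s => F s ^ q]

lemma lq_mono (hq : 1 ≤ q) {F G : ℝ → ℝ≥0∞} (h : ∀ s, 0 < s → F s ≤ G s) : lq q F ≤ lq q G := by
  refine ENNReal.rpow_le_rpow (lintegral_mono_ae ?_) (by positivity)
  filter_upwards [ae_haarPos] with s hs
  exact ENNReal.rpow_le_rpow (h s hs) (by linarith)

lemma lq_const_mul (hq : 1 ≤ q) {c : ℝ≥0∞} (hc : c ≠ ⊤) (F : ℝ → ℝ≥0∞) :
    lq q (fun s => c * F s) = c * lq q F := by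
  have hq0 : 0 < q := by linarith
  simp only [lq, ENNReal.mul_rpow_of_nonneg _ _ hq0.le]
  rw [lintegral_const_mul' _ _ (ENNReal.rpow_ne_top_of_nonneg hq0.le hc),
    ENNReal.mul_rpow_of_nonneg _ _ (by positivity), ← ENNReal.rpow_mul,
    mul_one_div_cancel hq0.ne', ENNReal.rpow_one]

lemma lq_zero (hq : 1 ≤ q) : lq q (fun _ => 0) = 0 := by
  have hq0 : 0 < q := by linarith
  simp [lq, ENNReal.zero_rpow_of_pos hq0, ENNReal.zero_rpow_of_pos (inv_pos.2 hq0)]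

lemma lq_add_le (hq : 1 ≤ q) {F G : ℝ → ℝ≥0∞} (hF : Measurable F) (hG : Measurable G) :
    lq q (fun s => F s + G s) ≤ lq q F + lq q G :=
  ENNReal.lintegral_Lp_add_le hF.aemeasurable hG.aemeasurable hq

lemma lq_sum_le (hq : 1 ≤ q) {ι : Type*} (S : Finset ι) {F : ι → ℝ → ℝ≥0∞}
    (hF : ∀ i, Measurable (F i)) : lq q (fun s => ∑ i ∈ S, F i s) ≤ ∑ i ∈ S, lq q (F i) := by
  classical
  induction S using Finset.induction_on with
  | empty => simp [lq_zero hq]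
  | insert i S hi ih =>
    simp only [Finset.sum_insert hi]
    exact (lq_add_le hq (hF i) (Finset.measurable_fun_sum _ fun i _ => hF i)).trans
      (add_le_add le_rfl ih)

/-- Minkowski's inequality for series. -/
lemma lq_tsum_le (hq : 1 ≤ q) {F : ℕ → ℝ → ℝ≥0∞} (hF : ∀ i, Measurable (F i)) :
    lq q (fun s => ∑' i, F i s) ≤ ∑' i, lq q (F i) := by
  have hq0 : 0 < q := by linarith
  have key : ∫⁻ s, (∑' i, F i s) ^ q ∂haarPos ≤ (∑' i, lq q (F i)) ^ q := by
    have e : ∀ s, (∑' i, F i s) ^ q = ⨆ N : ℕ, (∑ i ∈ Finset.range N, F i s) ^ q := fun s => by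
      rw [ENNReal.tsum_eq_iSup_nat]
      exact (ENNReal.orderIsoRpow q hq0).map_iSup _
    simp only [e]
    rw [lintegral_iSup
      (fun N => (Finset.measurable_fun_sum _ fun i _ => hF i).pow_const q)
      (fun N N' hN s => ENNReal.rpow_le_rpow
        (Finset.sum_le_sum_of_subset (Finset.range_mono hN)) hq0.le)]
    refine iSup_le fun N => ?_
    have h := (lq_sum_le hq (Finset.range N) hF).trans (ENNReal.sum_le_tsum _)
    rw [lq, one_div] at h
    exact (ENNReal.rpow_inv_le_iff hq0).1 h
  rw [lq, one_div]
  exact (ENNReal.rpow_inv_le_iff hq0).2 key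

lemma half_le_haarPos_Icc {h : ℝ} (hh : 0 < h) : 1 / 2 ≤ haarPos (Set.Icc h (2 * h)) := by
  have e : haarPos (Set.Icc h (2 * h)) =
      ∫⁻ s in Set.Icc h (2 * h), ENNReal.ofReal s⁻¹ := by
    rw [haarPos, withDensity_apply _ measurableSet_Icc, Measure.restrict_restrict measurableSet_Icc,
      Set.inter_eq_left.2]
    exact fun s hs => hh.trans_le hs.1
  rw [e]
  calc (1 / 2 : ℝ≥0∞) = ∫⁻ _ in Set.Icc h (2 * h), ENNReal.ofReal (2 * h)⁻¹ := by
        rw [setLIntegral_const, Real.volume_Icc, ← ENNReal.ofReal_mul (by positivity)]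
        have : (2 * h)⁻¹ * (2 * h - h) = 2⁻¹ := by field_simp; ring
        rw [this, ENNReal.ofReal_inv_of_pos two_pos]
        simp
    _ ≤ _ := setLIntegral_mono' measurableSet_Icc fun s hs =>
        ENNReal.ofReal_le_ofReal (inv_anti₀ (hh.trans_le hs.1) hs.2)

/-- A monotone function is controlled pointwise by its weighted `L^q(ds/s)` norm, because
`w(s) ≥ w(h)` on `[h, 2h]`, an interval of `ds/s`-mass at least `1/2`. -/
lemma le_mul_lq (hq : 1 ≤ q) {w : ℝ → ℝ} (hw : Monotone w) (hw0 : ∀ s, 0 ≤ w s) {α : ℝ}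
    (hα : 0 < α) (hfin : lq q (fun s => ENNReal.ofReal (s ^ (-α) * w s)) ≠ ⊤) {h : ℝ}
    (hh : 0 < h) :
    w h ≤ 2 * 2 ^ α * (lq q fun s => ENNReal.ofReal (s ^ (-α) * w s)).toReal * h ^ α := by
  have hq0 : 0 < q := by linarith
  set c := (2 * h) ^ (-α) * w h with hc
  have hc0 : 0 ≤ c := mul_nonneg (by positivity) (hw0 h)
  have h1 : ENNReal.ofReal c * (1 / 2) ≤ lq q fun s => ENNReal.ofReal (s ^ (-α) * w s) := by
    calc ENNReal.ofReal c * (1 / 2)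
        ≤ ENNReal.ofReal c * haarPos (Set.Icc h (2 * h)) ^ (1 / q) := by
          gcongr
          calc (1 / 2 : ℝ≥0∞) = (1 / 2) ^ (1 : ℝ) := by simp
            _ ≤ (1 / 2) ^ (1 / q) := ENNReal.rpow_le_rpow_of_exponent_ge (by simp)
              ((div_le_one hq0).2 hq)
            _ ≤ _ := ENNReal.rpow_le_rpow (half_le_haarPos_Icc hh) (by positivity)
      _ = (∫⁻ _ in Set.Icc h (2 * h), ENNReal.ofReal c ^ q ∂haarPos) ^ (1 / q) := by
          rw [setLIntegral_const, ENNReal.mul_rpow_of_nonneg _ _ (by positivity),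
            ← ENNReal.rpow_mul, mul_one_div_cancel hq0.ne', ENNReal.rpow_one]
      _ ≤ _ := by
          refine ENNReal.rpow_le_rpow ?_ (by positivity)
          refine le_trans (setLIntegral_mono' measurableSet_Icc fun s hs => ?_)
            (setLIntegral_le_lintegral (Set.Icc h (2 * h)) _)
          refine ENNReal.rpow_le_rpow (ENNReal.ofReal_le_ofReal ?_) hq0.le
          have hs0 : 0 < s := hh.trans_le hs.1
          exact mul_le_mul (Real.rpow_le_rpow_of_nonpos hs0 hs.2 (by linarith)) (hw hs.1)
            (hw0 h) (by positivity)
  have h2 := ENNReal.toReal_mono hfin h1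
  rw [ENNReal.toReal_mul, ENNReal.toReal_ofReal hc0] at h2
  simp only [one_div, ENNReal.toReal_inv, ENNReal.toReal_ofNat] at h2
  have h3 : w h = 2 * 2 ^ α * (c * 2⁻¹) * h ^ α := by
    rw [hc, Real.rpow_neg (by positivity), Real.mul_rpow (by norm_num) hh.le]
    have : (2 : ℝ) ^ α ≠ 0 := by positivity
    have : h ^ α ≠ 0 := by positivity
    field_simp
  rw [h3]
  gcongr

end HaarLq

/-! ### A Hardy type inequality for the moduli -/

section Hardy

variable {U : Fin n → ℝ → E →L[ℂ] E} {m r : ℕ} {C α : ℝ} {f : E}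
  {G : List (Fin n) → ℝ → E}

lemma ofReal_mixedMod_one_le {g : E} {s : ℝ} {B : ℝ≥0∞}
    (h : ∀ j, ∀ τ ∈ Set.Icc 0 s, ENNReal.ofReal ‖(U j τ - 1) g‖ ≤ B) :
    ENNReal.ofReal (mixedMod U 1 s g) ≤ n * B := by
  have hterm : ∀ J : Fin 1 → Fin n, ENNReal.ofReal
      (sSup ((fun τ : Fin 1 → ℝ => ‖diffProd U J τ g‖) ''
        Set.univ.pi fun _ => Set.Icc 0 s)) ≤ B := by
    intro J
    rcases eq_or_ne B ⊤ with rfl | hB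
    · exact le_top
    refine ENNReal.ofReal_le_of_le_toReal (Real.sSup_le ?_ ENNReal.toReal_nonneg)
    rintro _ ⟨τ, hτ, rfl⟩
    have := h (J 0) (τ 0) (hτ 0 (Set.mem_univ _))
    simp only [diffProd, List.ofFn_succ, List.ofFn_zero, List.prod_cons, List.prod_nil, mul_one]
    exact (ENNReal.ofReal_le_iff_le_toReal hB).1 this
  rw [IsIsomGroups.mixedMod_eq, ENNReal.ofReal_sum_of_nonneg]
  · refine (Finset.sum_le_sum fun J _ => hterm J).trans ?_
    simp
  · refine fun J _ => Real.sSup_nonneg ?_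
    rintro _ ⟨τ, _, rfl⟩
    exact norm_nonneg _

/-- The weight `s^{m-α}` turns the terms of the series at scales `h = 2⁻ᵈ s` into geometric multiples
of `h^{-α} Ω^r(h, f)`. -/
lemma rpow_mul_small {s : ℝ} (hs : 0 < s) (m d : ℕ) (C α ω : ℝ) :
    s ^ ((m : ℝ) - α) * (2 * C * (s * (1 / 2) ^ d)⁻¹ ^ m * ω) =
      2 * C * ((1 / 2 : ℝ) ^ (α - m)) ^ d * ((s * (1 / 2) ^ d) ^ (-α) * ω) := by
  have h1 := inv_pow_mul_rpow (h := s * (1 / 2) ^ d) (by positivity) m (m - α)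
  rw [mul_half_pow_rpow hs, sub_right_comm, sub_self, zero_sub] at h1
  have h2 : ((1 / 2 : ℝ) ^ (α - m)) ^ d * ((1 / 2 : ℝ) ^ ((m : ℝ) - α)) ^ d = 1 := by
    rw [← mul_pow, ← Real.rpow_add (by norm_num)]
    simp
  rw [← h1]
  linear_combination (-(2 * C * ω * (s * (1 / 2) ^ d)⁻¹ ^ m * s ^ ((m : ℝ) - α))) * h2

/-- The counterpart of `rpow_mul_small` at scales `h = 2ᵈ s`. -/
lemma rpow_mul_large {s : ℝ} (hs : 0 < s) (m d : ℕ) (C α ω : ℝ) :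
    s ^ ((m : ℝ) - α) * (C * s * (s * 2 ^ d)⁻¹ ^ (m + 1) * ω) =
      C * ((1 / 2 : ℝ) ^ (m + 1 - α)) ^ d * ((s * 2 ^ d) ^ (-α) * ω) := by
  have h1 := inv_pow_mul_rpow (h := s * 2 ^ d) (by positivity) (m + 1) (m + 1 - α)
  have e : (m : ℝ) + 1 - α - (m + 1 : ℕ) = -α := by push_cast; ring
  have e' : s ^ ((m : ℝ) + 1 - α) = s * s ^ ((m : ℝ) - α) := by
    rw [show (m : ℝ) + 1 - α = 1 + (m - α) by ring, Real.rpow_add hs, Real.rpow_one]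
  rw [e, Real.mul_rpow hs.le (by positivity), ← Real.rpow_pow_comm (by norm_num), e'] at h1
  have h2 : ((1 / 2 : ℝ) ^ ((m : ℝ) + 1 - α)) ^ d * ((2 : ℝ) ^ ((m : ℝ) + 1 - α)) ^ d = 1 := by
    rw [← mul_pow, ← Real.mul_rpow (by norm_num) (by norm_num)]
    simp
  rw [← h1]
  linear_combination (-(C * ω * (s * 2 ^ d)⁻¹ ^ (m + 1) * s * s ^ ((m : ℝ) - α))) * h2

/-- The constant in the Hardy type inequality below. -/
def hardyConst (n m : ℕ) (C α : ℝ) : ℝ≥0∞ :=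
  n * ((∑' d : ℕ, ENNReal.ofReal (2 * C) * ENNReal.ofReal ((1 / 2 : ℝ) ^ (α - m)) ^ d) +
    ∑' d : ℕ, ENNReal.ofReal C * ENNReal.ofReal ((1 / 2 : ℝ) ^ (m + 1 - α)) ^ (d + 1))

lemma hardyConst_ne_top (n : ℕ) (C : ℝ) (hmα : (m : ℝ) < α) (hαm : α < m + 1) :
    hardyConst n m C α ≠ ⊤ := by
  have h : ∀ γ : ℝ, 0 < γ → ∑' d : ℕ, ENNReal.ofReal ((1 / 2 : ℝ) ^ γ) ^ d ≠ ⊤ := fun γ hγ => by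
    rw [ENNReal.tsum_geometric, ENNReal.inv_ne_top, ← ENNReal.ofReal_one,
      ← ENNReal.ofReal_sub _ (by positivity)]
    exact (ENNReal.ofReal_pos.2 (sub_pos.2 (half_rpow_lt_one hγ))).ne'
  refine ENNReal.mul_ne_top (ENNReal.natCast_ne_top n) (ENNReal.add_ne_top.2 ⟨?_, ?_⟩)
  · rw [ENNReal.tsum_mul_left]
    exact ENNReal.mul_ne_top ENNReal.ofReal_ne_top (h _ (sub_pos.2 hmα))
  · simp only [pow_succ, ENNReal.tsum_mul_left, ENNReal.tsum_mul_right]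
    exact ENNReal.mul_ne_top ENNReal.ofReal_ne_top
      (ENNReal.mul_ne_top (h _ (sub_pos.2 hαm)) ENNReal.ofReal_ne_top)

variable [CompleteSpace E]

lemma IsApprox.ofReal_mixedMod_one_le (hU : IsIsomGroups U) (hC : 0 < C)
    (hG : IsApprox U (m + 1) r C f G) {L : List (Fin n)} (hL : L.length = m)
    {g : E} (hg : ∀ s, 0 < s → Tendsto (fun d : ℕ => G L (s * (1 / 2) ^ d)) atTop (𝓝 g))
    {s : ℝ} (hs : 0 < s) :
    ENNReal.ofReal (s ^ ((m : ℝ) - α) * mixedMod U 1 s g) ≤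
      n * ((∑' d : ℕ, ENNReal.ofReal (2 * C) * ENNReal.ofReal ((1 / 2 : ℝ) ^ (α - m)) ^ d *
        ENNReal.ofReal ((s * (1 / 2) ^ d) ^ (-α) * mixedMod U r (s * (1 / 2) ^ d) f)) +
      ∑' d : ℕ, ENNReal.ofReal C * ENNReal.ofReal ((1 / 2 : ℝ) ^ (m + 1 - α)) ^ (d + 1) *
        ENNReal.ofReal ((s * 2 ^ (d + 1)) ^ (-α) * mixedMod U r (s * 2 ^ (d + 1)) f)) := by
  have h := _root_.ofReal_mixedMod_one_le (U := U) (g := g) (s := s)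
    fun j τ hτ => hG.norm_diff_le hU hL hg hs j hτ
  have hs' : 0 ≤ s ^ ((m : ℝ) - α) := by positivity
  have hC2 : 0 ≤ 2 * C := by positivity
  rw [ENNReal.ofReal_mul hs']
  refine (mul_le_mul_right h _).trans_eq ?_
  rw [mul_left_comm, mul_add, ← ENNReal.tsum_mul_left, ← ENNReal.tsum_mul_left]
  congr 3
  · funext d
    rw [← ENNReal.ofReal_mul hs', rpow_mul_small hs, ← ENNReal.ofReal_pow (by positivity),
      ← ENNReal.ofReal_mul hC2, ← ENNReal.ofReal_mul (by positivity)]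
  · funext d
    rw [← ENNReal.ofReal_mul hs', rpow_mul_large hs, ← ENNReal.ofReal_pow (by positivity),
      ← ENNReal.ofReal_mul hC.le, ← ENNReal.ofReal_mul (by positivity)]

/-- A Hardy type inequality, obtained by integrating the previous pointwise bound with Minkowski's
inequality and the dilation invariance of `ds/s`; `m < α < m + 1` makes both series converge. -/
lemma IsApprox.lq_le {q : ℝ} (hq : 1 ≤ q) (hU : IsIsomGroups U) (hC : 0 < C)
    (hG : IsApprox U (m + 1) r C f G) {L : List (Fin n)} (hL : L.length = m)
    {g : E} (hg : ∀ s, 0 < s → Tendsto (fun d : ℕ => G L (s * (1 / 2) ^ d)) atTop (𝓝 g)) :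
    lq q (fun s => ENNReal.ofReal (s ^ ((m : ℝ) - α) * mixedMod U 1 s g)) ≤
      hardyConst n m C α * lq q fun s => ENNReal.ofReal (s ^ (-α) * mixedMod U r s f) := by
  set a : ℝ → ℝ≥0∞ := fun s => ENNReal.ofReal (s ^ (-α) * mixedMod U r s f) with ha
  have ham : Measurable a :=
    ((measurable_id.pow_const (-α)).mul (hU.mixedMod_mono r f).measurable).ennreal_ofReal
  have hne : ∀ (x y : ℝ) (d : ℕ), ENNReal.ofReal x * ENNReal.ofReal y ^ d ≠ ⊤ := fun x y d =>
    ENNReal.mul_ne_top ENNReal.ofReal_ne_top (ENNReal.pow_ne_top ENNReal.ofReal_ne_top)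
  have hm : ∀ (κ : ℝ≥0∞) (c : ℝ), Measurable fun s => κ * a (s * c) := fun κ c =>
    (ham.comp (measurable_id.mul_const c)).const_mul κ
  have hser : ∀ (κ : ℕ → ℝ≥0∞) (c : ℕ → ℝ), (∀ d, κ d ≠ ⊤) → (∀ d, 0 < c d) →
      lq q (fun s => ∑' d, κ d * a (s * c d)) ≤ (∑' d, κ d) * lq q a := fun κ c hκ hc => by
    refine (lq_tsum_le hq fun d => hm (κ d) (c d)).trans_eq ?_
    rw [← ENNReal.tsum_mul_right]
    congr 1
    funext d
    rw [lq_const_mul hq (hκ d) fun s => a (s * c d), lq_comp_mul (hc d) a]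
  refine (lq_mono hq fun s hs => hG.ofReal_mixedMod_one_le hU hC hL hg hs).trans ?_
  rw [lq_const_mul hq (ENNReal.natCast_ne_top n), hardyConst, mul_assoc, add_mul]
  gcongr
  refine (lq_add_le hq ?_ ?_).trans (add_le_add (hser _ (fun d => (1 / 2) ^ d) ?_ ?_)
    (hser _ (fun d => 2 ^ (d + 1)) ?_ ?_))
  · exact Measurable.tsum fun d => hm _ _
  · exact Measurable.tsum fun d => hm _ _
  · exact fun d => hne _ _ _
  · exact fun d => by positivity
  · exact fun d => hne _ _ _
  · exact fun d => by positivity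

end Hardy

/-! ### The lower bound -/

section Lower

variable {U : Fin n → ℝ → E →L[ℂ] E} {m r : ℕ} {α q : ℝ}

lemma length_multiIndexList (a : Fin n → ℕ) : (multiIndexList a).length = ∑ i, a i := by
  simp [multiIndexList, List.length_flatten, List.sum_ofFn, Function.comp_def]

lemma besovOmega_eq (hq : 1 ≤ q) (f : E) : besovOmega U r α q f =
    ENNReal.ofReal ‖f‖ + lq q fun s => ENNReal.ofReal (s ^ (-α) * mixedMod U r s f) := by
  rw [besovOmega, lq, setLIntegral_eq_lintegral_haarPos (by linarith)]
  exact fun s hs => mul_nonneg (by positivity) (IsIsomGroups.mixedMod_nonneg r s f)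

lemma lintegral_mixedMod_one_eq (hq : 1 ≤ q) (g : E) :
    (∫⁻ s in Set.Ioi (0 : ℝ),
      ENNReal.ofReal ((s ^ ((m : ℝ) - α) * mixedMod U 1 s g) ^ q / s)) ^ (1 / q) =
    lq q fun s => ENNReal.ofReal (s ^ ((m : ℝ) - α) * mixedMod U 1 s g) := by
  rw [lq, setLIntegral_eq_lintegral_haarPos (by linarith)]
  exact fun s hs => mul_nonneg (by positivity) (IsIsomGroups.mixedMod_nonneg 1 s g)

variable [CompleteSpace E]

/-- Every derivative of order `m < α < m + 1` exists when the norm `N₂` is finite, and both its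
norm and its first-order modulus are controlled by `N₂`. -/
lemma exists_besov_deriv (hU : IsIsomGroups U) (hq : 1 ≤ q) (hα : 0 < α) (hmα : (m : ℝ) < α)
    (hαm : α < m + 1) : ∃ K : ℝ≥0∞, K ≠ ⊤ ∧ ∀ f : E, besovOmega U r α q f ≠ ⊤ →
      ∀ L : List (Fin n), L.length = m → ∃ g, IsIterDeriv U L f g ∧
        ENNReal.ofReal ‖g‖ ≤ K * besovOmega U r α q f ∧
        (lq q fun s => ENNReal.ofReal (s ^ ((m : ℝ) - α) * mixedMod U 1 s g)) ≤
          K * besovOmega U r α q f := by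
  obtain ⟨C, hC, hG⟩ := hU.exists_isApprox (m + 1) r
  have hκ : 0 < 1 - (1 / 2 : ℝ) ^ (α - m) := sub_pos.2 (half_rpow_lt_one (sub_pos.2 hmα))
  set D := C + C * (2 * 2 ^ α) / (1 - (1 / 2 : ℝ) ^ (α - m)) with hD
  refine ⟨ENNReal.ofReal D + hardyConst n m C α,
    ENNReal.add_ne_top.2 ⟨ENNReal.ofReal_ne_top, hardyConst_ne_top n C hmα hαm⟩, ?_⟩
  intro f hfin L hL
  rw [besovOmega_eq hq] at hfin ⊢
  set A := lq q fun s => ENNReal.ofReal (s ^ (-α) * mixedMod U r s f) with hA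
  have hA' : A ≠ ⊤ := (ENNReal.add_ne_top.1 hfin).2
  have hω : ∀ h, 0 < h → mixedMod U r h f ≤ 2 * 2 ^ α * A.toReal * h ^ α := fun h hh =>
    le_mul_lq hq (hU.mixedMod_mono r f) (fun s => IsIsomGroups.mixedMod_nonneg r s f) hα hA' hh
  have hM : 0 ≤ 2 * 2 ^ α * A.toReal := by positivity
  obtain ⟨G, hG⟩ := hG f
  obtain ⟨g, hg, hlim⟩ := hG.exists_isIterDeriv hU hC hM hα hmα hω L hL.le
  refine ⟨g, hg, ?_, ?_⟩
  · have h1 := hG.norm_le_of_tendsto hC hM hmα hω hL.le hlim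
    have h2 : ‖g‖ ≤ D * (‖f‖ + A.toReal) := by
      have h3 : 0 ≤ C * (2 * 2 ^ α) / (1 - (1 / 2 : ℝ) ^ (α - m)) * ‖f‖ := by positivity
      have h4 : 0 ≤ C * A.toReal := by positivity
      calc ‖g‖ ≤ _ := h1
        _ = C * ‖f‖ + C * (2 * 2 ^ α) / (1 - (1 / 2 : ℝ) ^ (α - m)) * A.toReal := by ring
        _ ≤ _ := by rw [hD]; linarith
    calc ENNReal.ofReal ‖g‖ ≤ ENNReal.ofReal (D * (‖f‖ + A.toReal)) := ENNReal.ofReal_le_ofReal h2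
      _ = ENNReal.ofReal D * (ENNReal.ofReal ‖f‖ + A) := by
        rw [ENNReal.ofReal_mul (by positivity),
          ENNReal.ofReal_add (norm_nonneg _) ENNReal.toReal_nonneg, ENNReal.ofReal_toReal hA']
      _ ≤ _ := mul_le_mul_left le_self_add _
  · calc _ ≤ hardyConst n m C α * A := hG.lq_le hq hU hC hL hlim
      _ ≤ _ := mul_le_mul' le_add_self le_add_self

/-- The bound `c N₁ ≤ N₂`. The summand `1` in the constant keeps it nonzero, as is needed when
`N₂ = ∞`. -/
lemma besovFracNorm_le (hU : IsIsomGroups U) (hq : 1 ≤ q) (hα : 0 < α) (hmα : (m : ℝ) < α)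
    (hαm : α < m + 1) : ∃ K : ℝ≥0∞, K ≠ ⊤ ∧ ∀ f : E,
      besovFracNorm U m α q f ≤ K * besovOmega U r α q f := by
  classical
  obtain ⟨K, hK, H⟩ := exists_besov_deriv (r := r) hU hq hα hmα hαm
  set S := (Fintype.piFinset fun _ : Fin n => Finset.range (m + 1)).filter
    (fun a => (∑ i, a i) = m ∧ m ≠ 0) with hS
  refine ⟨1 + S.card * K + Fintype.card (Fin m → Fin n) * K, by finiteness, fun f => ?_⟩
  rcases eq_or_ne (besovOmega U r α q f) ⊤ with htop | hfin
  · rw [htop, ENNReal.mul_top (by simp)]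
    exact le_top
  rw [add_mul, add_mul, one_mul, besovFracNorm, WNormE]
  refine add_le_add (add_le_add le_self_add ?_) ?_
  · rw [mul_assoc, ← nsmul_eq_mul]
    refine Finset.sum_le_card_nsmul _ _ _ fun a ha => ?_
    have hlen : (multiIndexList a).length = m := by
      rw [length_multiIndexList]
      exact (Finset.mem_filter.1 ha).2.1
    obtain ⟨g, hg, hb, -⟩ := H f hfin _ hlen
    have hex : ∃ g, IsIterDeriv U (multiIndexList a) f g := ⟨g, hg⟩
    rw [dif_pos hex, hex.choose_spec.unique hg]
    exact hb
  · rw [mul_assoc, ← nsmul_eq_mul]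
    refine Finset.sum_le_card_nsmul _ _ _ fun J _ => ?_
    obtain ⟨g, hg, -, hb⟩ := H f hfin (List.ofFn J) (List.length_ofFn)
    have hex : ∃ g, IsIterDeriv U (List.ofFn J) f g := ⟨g, hg⟩
    rw [dif_pos hex, hex.choose_spec.unique hg, lintegral_mixedMod_one_eq hq]
    exact hb

end Lower

/-! ### The upper bound -/

section Upper

variable {U : Fin n → ℝ → E →L[ℂ] E} {m r : ℕ} {α q : ℝ}

lemma norm_diff_le_mixedMod_one (hU : IsIsomGroups U) (j : Fin n) {s τ : ℝ}
    (hτ : τ ∈ Set.Icc 0 s) (g : E) : ‖(U j τ - 1) g‖ ≤ mixedMod U 1 s g := by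
  rw [IsIsomGroups.mixedMod_eq]
  have h1 : ‖(U j τ - 1) g‖ ≤ sSup ((fun τ : Fin 1 → ℝ => ‖diffProd U (fun _ => j) τ g‖) ''
      Set.univ.pi fun _ => Set.Icc 0 s) := by
    refine le_csSup (hU.bddAbove_diffProd _ s g) ⟨fun _ => τ, fun _ _ => hτ, ?_⟩
    simp [diffProd, List.ofFn_succ]
  refine h1.trans (Finset.single_le_sum (f := fun J : Fin 1 → Fin n =>
    sSup ((fun τ : Fin 1 → ℝ => ‖diffProd U J τ g‖) '' Set.univ.pi fun _ => Set.Icc 0 s))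
    (fun J _ => Real.sSup_nonneg ?_) (Finset.mem_univ fun _ => j))
  rintro _ ⟨τ, _, rfl⟩
  exact norm_nonneg _

variable [CompleteSpace E]

/-- Each difference is estimated by `s` times the corresponding derivative. The operator `X` collects
the differences commuted past the remaining ones in the course of the induction. -/
lemma norm_diffProd_apply_le (hU : IsIsomGroups U) (J : Fin m → Fin n) {f g : E}
    (hg : IsIterDeriv U (List.ofFn J) f g) {s : ℝ} {τ : Fin m → ℝ}
    (hτ : ∀ i, τ i ∈ Set.Icc 0 s) {X : E →L[ℂ] E} (hX : X ∈ bicomm U) :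
    ‖diffProd U J τ (X f)‖ ≤ s ^ m * ‖X g‖ := by
  induction m generalizing g X with
  | zero =>
    have : g = f := by simpa [IsIterDeriv] using hg
    simp [diffProd, this]
  | succ m ih =>
    rw [List.ofFn_succ] at hg
    obtain ⟨k, hk, hkg⟩ := hg
    have hs : 0 ≤ s := (hτ 0).1.trans (hτ 0).2
    have hY : U (J 0) (τ 0) - 1 ∈ bicomm U :=
      Subalgebra.sub_mem _ (hU.mem_bicomm _ _) (Subalgebra.one_mem _)
    rw [diffProd_succ, (hU.commute_of_mem hY (hU.diffProd_mem _ _)).eq, mul_apply_eq_comp,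
      ← mul_apply_eq_comp (U (J 0) (τ 0) - 1) X]
    refine (ih _ hk (fun i => hτ i.succ) (Subalgebra.mul_mem _ hY hX)).trans ?_
    rw [mul_apply_eq_comp]
    have h1 := hU.norm_sub_le_of_genDeriv (hkg.map X
      fun t => hU.commute_of_mem (hU.mem_bicomm _ t) hX) (τ 0)
    rw [abs_of_nonneg (hτ 0).1] at h1
    calc _ ≤ s ^ m * (s * ‖X g‖) := by
          gcongr
          exact h1.trans (mul_le_mul_of_nonneg_right (hτ 0).2 (norm_nonneg _))
      _ = _ := by ring

/-- Of the `r ≥ m + 1` differences, `m` are converted into derivatives, one is kept for the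
first-order modulus, and the others are bounded trivially. -/
lemma norm_diffProd_le_sum (hU : IsIsomGroups U) {f : E} {g : (Fin m → Fin n) → E}
    (hg : ∀ J, IsIterDeriv U (List.ofFn J) f (g J)) (hr : m + 1 ≤ r) (J : Fin r → Fin n)
    {s : ℝ} {τ : Fin r → ℝ} (hτ : ∀ i, τ i ∈ Set.Icc 0 s) :
    ‖diffProd U J τ f‖ ≤ 2 ^ r * (s ^ m * ∑ J', mixedMod U 1 s (g J')) := by
  have hsum : 0 ≤ ∑ J', mixedMod U 1 s (g J') :=
    Finset.sum_nonneg fun J' _ => IsIsomGroups.mixedMod_nonneg _ _ _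
  induction r, hr using Nat.le_induction with
  | base =>
    have hs : 0 ≤ s := (hτ 0).1.trans (hτ 0).2
    have hY : U (J 0) (τ 0) - 1 ∈ bicomm U :=
      Subalgebra.sub_mem _ (hU.mem_bicomm _ _) (Subalgebra.one_mem _)
    set J' : Fin m → Fin n := fun i => J i.succ with hJ'
    rw [diffProd_succ, (hU.commute_of_mem hY (hU.diffProd_mem _ _)).eq, mul_apply_eq_comp]
    calc _ ≤ s ^ m * ‖(U (J 0) (τ 0) - 1) (g J')‖ :=
          norm_diffProd_apply_le hU J' (hg J') (fun i => hτ i.succ) hY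
      _ ≤ s ^ m * ∑ J', mixedMod U 1 s (g J') := by
          gcongr
          exact (norm_diff_le_mixedMod_one hU _ (hτ 0) _).trans
            (Finset.single_le_sum (f := fun J' => mixedMod U 1 s (g J'))
              (fun J' _ => IsIsomGroups.mixedMod_nonneg _ _ _) (Finset.mem_univ J'))
      _ ≤ _ := le_mul_of_one_le_left (by positivity) (one_le_pow₀ one_le_two)
  | succ r hr ih =>
    rw [diffProd_succ, mul_apply_eq_comp, pow_succ', mul_assoc]
    exact (hU.norm_diff_le _ _ _).trans
      (mul_le_mul_of_nonneg_left (ih _ fun i => hτ i.succ) zero_le_two)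

lemma mixedMod_le_sum (hU : IsIsomGroups U) {f : E} {g : (Fin m → Fin n) → E}
    (hg : ∀ J, IsIterDeriv U (List.ofFn J) f (g J)) (hr : m + 1 ≤ r) {s : ℝ} (hs : 0 < s) :
    mixedMod U r s f ≤ n ^ r * 2 ^ r * (s ^ m * ∑ J', mixedMod U 1 s (g J')) := by
  have hsum : 0 ≤ ∑ J', mixedMod U 1 s (g J') :=
    Finset.sum_nonneg fun J' _ => IsIsomGroups.mixedMod_nonneg _ _ _
  rw [IsIsomGroups.mixedMod_eq]
  refine (Finset.sum_le_card_nsmul _ _ (2 ^ r * (s ^ m * ∑ J', mixedMod U 1 s (g J')))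
    fun J _ => Real.sSup_le ?_ (by positivity)).trans_eq ?_
  · rintro _ ⟨τ, hτ, rfl⟩
    exact norm_diffProd_le_sum hU hg hr J fun i => hτ i (Set.mem_univ _)
  · simp [nsmul_eq_mul, mul_assoc]

/-- The bound `N₂ ≤ C N₁`; when some derivative of order `m` is missing, `N₁ = ∞`. -/
lemma besovOmega_le (hU : IsIsomGroups U) (hq : 1 ≤ q) (hr : m + 1 ≤ r) (f : E) :
    besovOmega U r α q f ≤ (1 + ENNReal.ofReal (n ^ r * 2 ^ r)) * besovFracNorm U m α q f := by
  classical
  by_cases hex : ∀ J : Fin m → Fin n, ∃ g, IsIterDeriv U (List.ofFn J) f g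
  swap
  · push Not at hex
    obtain ⟨J, hJ⟩ := hex
    have htop : besovFracNorm U m α q f = ⊤ := by
      rw [besovFracNorm, ENNReal.add_eq_top]
      right
      refine ENNReal.sum_eq_top.2 ⟨J, Finset.mem_univ _, dif_neg ?_⟩
      simpa using hJ
    rw [htop, ENNReal.mul_top (by simp)]
    exact le_top
  have hfrac : besovFracNorm U m α q f = WNormE U m f + ∑ J : Fin m → Fin n,
      lq q fun s => ENNReal.ofReal (s ^ ((m : ℝ) - α) * mixedMod U 1 s (hex J).choose) := by
    rw [besovFracNorm]
    congr 1
    refine Finset.sum_congr rfl fun J _ => ?_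
    rw [dif_pos (hex J), lintegral_mixedMod_one_eq hq]
  have hmeas : ∀ J : Fin m → Fin n, Measurable fun s : ℝ =>
      ENNReal.ofReal (s ^ ((m : ℝ) - α) * mixedMod U 1 s (hex J).choose) := fun J =>
    ((measurable_id.pow_const _).mul (hU.mixedMod_mono 1 _).measurable).ennreal_ofReal
  have hlq : (lq q fun s => ENNReal.ofReal (s ^ (-α) * mixedMod U r s f)) ≤
      ENNReal.ofReal (n ^ r * 2 ^ r) * ∑ J : Fin m → Fin n,
        lq q fun s => ENNReal.ofReal (s ^ ((m : ℝ) - α) * mixedMod U 1 s (hex J).choose) := by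
    calc _ ≤ lq q fun s => ENNReal.ofReal (n ^ r * 2 ^ r) * ∑ J : Fin m → Fin n,
          ENNReal.ofReal (s ^ ((m : ℝ) - α) * mixedMod U 1 s (hex J).choose) := by
          refine lq_mono hq fun s hs => ?_
          rw [← ENNReal.ofReal_sum_of_nonneg fun J _ =>
            mul_nonneg (by positivity) (IsIsomGroups.mixedMod_nonneg _ _ _),
            ← ENNReal.ofReal_mul (by positivity)]
          refine ENNReal.ofReal_le_ofReal ?_
          calc _ ≤ s ^ (-α) * (n ^ r * 2 ^ r * (s ^ m * ∑ J, mixedMod U 1 s (hex J).choose)) :=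
                mul_le_mul_of_nonneg_left
                  (mixedMod_le_sum hU (fun J => (hex J).choose_spec) hr hs) (by positivity)
            _ = _ := by
                rw [← Finset.mul_sum, sub_eq_add_neg, Real.rpow_add hs, Real.rpow_natCast]
                ring
      _ ≤ _ := by
          rw [lq_const_mul hq ENNReal.ofReal_ne_top]
          gcongr
          exact lq_sum_le hq _ hmeas
  rw [besovOmega_eq hq, hfrac, add_mul, one_mul]
  refine add_le_add ?_ (hlq.trans (mul_le_mul_right le_add_self _))
  rw [WNormE]
  exact le_self_add.trans le_self_add

end Upper

end Groups

/-- For non-integer `0 < α < r`, the Besov–Mellin norm (3.8) (through the Sobolev norm of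
order `[α]` and first-order moduli of the derivatives of order `[α]`) is equivalent to
`‖f‖_{X^p} + (∫₀^∞ (s^{-α} Ω^r_p(s,f))^q ds/s)^{1/q}`. -/
theorem besov_mellin_norms_equivalent {n : ℕ} (p : ℝ≥0∞) [Fact (1 ≤ p)] (hp : p ≠ ∞)
    (U : Fin n → ℝ → (Lp ℂ p (mellinMeasure n) →L[ℂ] Lp ℂ p (mellinMeasure n)))
    (hU : IsMellinTranslation p U)
    (r : ℕ) (α q : ℝ) (hq : 1 ≤ q) (hα : 0 < α) (hαr : α < (r : ℝ))
    (hnotint : (⌊α⌋₊ : ℝ) ≠ α) :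
    ∃ c C : ℝ, 0 < c ∧ 0 < C ∧ ∀ f : Lp ℂ p (mellinMeasure n),
      ENNReal.ofReal c * besovFracNorm U ⌊α⌋₊ α q f ≤ besovOmega U r α q f ∧
      besovOmega U r α q f ≤ ENNReal.ofReal C * besovFracNorm U ⌊α⌋₊ α q f := by
  have hU' := hU.isIsomGroups hp
  set m := ⌊α⌋₊ with hm
  have hmα : (m : ℝ) < α := lt_of_le_of_ne (Nat.floor_le hα.le) hnotint
  have hαm : α < m + 1 := Nat.lt_floor_add_one α
  have hr : m + 1 ≤ r := by
    have : (m : ℝ) < r := hmα.trans hαr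
    exact_mod_cast this
  obtain ⟨K, hK, H⟩ := besovFracNorm_le (r := r) hU' hq hα hmα hαm
  have hK1 : 0 < K.toReal + 1 := by positivity
  refine ⟨(K.toReal + 1)⁻¹, 1 + n ^ r * 2 ^ r, by positivity, by positivity, fun f => ⟨?_, ?_⟩⟩
  · rw [ENNReal.ofReal_inv_of_pos hK1, mul_comm, ← div_eq_mul_inv]
    refine ENNReal.div_le_of_le_mul ?_
    rw [mul_comm]
    refine (H f).trans (mul_le_mul_left ?_ _)
    rw [← ENNReal.ofReal_toReal hK, ENNReal.toReal_ofReal ENNReal.toReal_nonneg]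
    exact ENNReal.ofReal_le_ofReal (by linarith)
  · rw [ENNReal.ofReal_add zero_le_one (by positivity), ENNReal.ofReal_one]
    exact besovOmega_le hU' hq hr f
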